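/- arXiv:2407.09558 — 7 statements merged into one kernel-verified Lean document; each statement's English description precedes it below -/
import Mathlib

section
/- The set of nonzero integers k for which the Mordell equation y² = x³ + k has exactly |k| integral solutions (x, y) ∈ ℤ² is finite. -/
namespace Mord
open Finset Polynomial

lemma ap_dvd (c : ℤ) (m : ℕ) : ((m.factorial : ℕ) : ℤ) ∣ 3 ^ m * ∏ r ∈ range m, (c + 3 * r) := by
  obtain ⟨v, w, hw, hm⟩ := Nat.exists_eq_pow_mul_and_not_dvd (Nat.factorial_ne_zero m) 3 (by norm_num)
  have hv : v ≤ m := by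
    have h1 := @padicValNat_factorial_le 3 ⟨by norm_num⟩ m
    have : Fact (Nat.Prime 3) := ⟨by norm_num⟩
    have h2 : 3 ^ v ∣ m.factorial := hm ▸ Dvd.intro _ rfl
    have := (padicValNat_dvd_iff_le (Nat.factorial_ne_zero m)).1 h2
    omega
  have hcop : IsCoprime (3 : ℤ) (w : ℤ) := by
    have : Nat.Coprime 3 w := (Nat.Prime.coprime_iff_not_dvd (by norm_num)).2 hw
    exact_mod_cast Nat.isCoprime_iff_coprime.2 this
  obtain ⟨g, h, hgh⟩ := hcop
  -- g*3 + h*w = 1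
  have hcg : IsCoprime (w : ℤ) (g ^ m) := by
    apply IsCoprime.pow_right
    exact ⟨h, 3, by linarith⟩
  have hwd : (w : ℤ) ∣ ∏ r ∈ range m, (c + 3 * r) := by
    apply hcg.dvd_of_dvd_mul_left
    have e1 : g ^ m * ∏ r ∈ range m, (c + 3 * (r:ℤ)) = ∏ r ∈ range m, (g * (c + 3 * r)) := by
      rw [prod_mul_distrib]; simp
    have e2 : (∏ r ∈ range m, (g * (c + 3 * (r:ℤ)))) ≡ ∏ r ∈ range m, (g * c + r) [ZMOD w] := by
      apply Int.ModEq.prod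
      intro r _
      apply Int.modEq_iff_dvd.2
      refine ⟨h * r, ?_⟩
      linear_combination (-(r:ℤ)) * hgh
    have e3 := Nat.factorial_coe_dvd_prod m (g * c)
    have e4 : (w : ℤ) ∣ ∏ r ∈ range m, (g * c + r) := by
      refine dvd_trans ?_ e3
      exact_mod_cast Dvd.intro_left _ hm.symm
    rw [e1]
    exact (Int.ModEq.dvd_iff e2).2 e4
  rw [hm]; push_cast
  exact mul_dvd_mul (pow_dvd_pow _ hv) hwd

/-- numerator products -/
def p2 (i m : ℕ) : ℕ := ∏ r ∈ range m, (3 * (i + r) + 2)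
def p4 (i m : ℕ) : ℕ := ∏ r ∈ range m, (3 * (i + r) + 4)

def cc (i m : ℕ) : ℕ := (3 ^ m * p2 i m / m.factorial) * (3 ^ i * p4 m i / i.factorial)

lemma dvd2 (i m : ℕ) : m.factorial ∣ 3 ^ m * p2 i m := by
  have := ap_dvd (3 * i + 2) m
  have h : (3:ℤ) ^ m * ∏ r ∈ range m, ((3 * i + 2 : ℤ) + 3 * r) = ((3 ^ m * p2 i m : ℕ) : ℤ) := by
    unfold p2; push_cast; congr 1; apply prod_congr rfl; intros; ring
  rw [h] at this
  exact_mod_cast this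

lemma dvd4 (i m : ℕ) : m.factorial ∣ 3 ^ m * p4 i m := by
  have := ap_dvd (3 * i + 4) m
  have h : (3:ℤ) ^ m * ∏ r ∈ range m, ((3 * i + 4 : ℤ) + 3 * r) = ((3 ^ m * p4 i m : ℕ) : ℤ) := by
    unfold p4; push_cast; congr 1; apply prod_congr rfl; intros; ring
  rw [h] at this
  exact_mod_cast this

lemma cc_eq (i m : ℕ) : cc i m * (m.factorial * i.factorial) = 3 ^ (i + m) * p2 i m * p4 m i := by
  unfold cc
  have h1 := Nat.div_mul_cancel (dvd2 i m)
  have h2 := Nat.div_mul_cancel (dvd4 m i)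
  calc _ = (3 ^ m * p2 i m / m.factorial * m.factorial) * (3 ^ i * p4 m i / i.factorial * i.factorial) := by ring
    _ = _ := by rw [h1, h2]; ring

lemma p2_le (i m : ℕ) : p2 i m ≤ 3 ^ m * (i + 1).ascFactorial m := by
  rw [Nat.ascFactorial_eq_prod_range]
  unfold p2
  calc _ ≤ ∏ r ∈ range m, (3 * (i + 1 + r)) := by
        apply prod_le_prod'; intros; omega
    _ = _ := by rw [prod_mul_distrib]; simp

lemma p4_le (i m : ℕ) : p4 i m ≤ 3 ^ m * (i + 2).ascFactorial m := by
  rw [Nat.ascFactorial_eq_prod_range]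
  unfold p4
  calc _ ≤ ∏ r ∈ range m, (3 * (i + 2 + r)) := by
        apply prod_le_prod'; intros; omega
    _ = _ := by rw [prod_mul_distrib]; simp

lemma cc_le (i m : ℕ) : cc i m ≤ 2 * 36 ^ (i + m) := by
  have a1 : 3 ^ m * p2 i m / m.factorial ≤ 9 ^ m * 2 ^ (i + m) := by
    apply Nat.div_le_of_le_mul
    calc 3 ^ m * p2 i m ≤ 3 ^ m * (3 ^ m * (m.factorial * (i + m).choose m)) := by
          rw [← Nat.ascFactorial_eq_factorial_mul_choose]; gcongr; exact p2_le i m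
      _ ≤ 3 ^ m * (3 ^ m * (m.factorial * 2 ^ (i + m))) := by gcongr; exact Nat.choose_le_two_pow _ _
      _ = _ := by rw [show 9 = 3 * 3 by norm_num, mul_pow]; ring
  have a2 : 3 ^ i * p4 m i / i.factorial ≤ 9 ^ i * 2 ^ (m + 1 + i) := by
    apply Nat.div_le_of_le_mul
    calc 3 ^ i * p4 m i ≤ 3 ^ i * (3 ^ i * (i.factorial * (m + 1 + i).choose i)) := by
          rw [← Nat.ascFactorial_eq_factorial_mul_choose]; gcongr; exact p4_le m i
      _ ≤ 3 ^ i * (3 ^ i * (i.factorial * 2 ^ (m + 1 + i))) := by gcongr; exact Nat.choose_le_two_pow _ _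
      _ = _ := by rw [show 9 = 3 * 3 by norm_num, mul_pow]; ring
  calc cc i m ≤ (9 ^ m * 2 ^ (i + m)) * (9 ^ i * 2 ^ (m + 1 + i)) := Nat.mul_le_mul a1 a2
    _ = 2 * (9 ^ (i + m) * 2 ^ (i + m) * 2 ^ (i + m)) := by ring
    _ = _ := by rw [← mul_pow, ← mul_pow]; norm_num

lemma cc_pos (i m : ℕ) : 0 < cc i m := by
  have h := cc_eq i m
  have : 0 < 3 ^ (i + m) * p2 i m * p4 m i := by
    unfold p2 p4
    have h1 : 0 < ∏ r ∈ range m, (3 * (i + r) + 2) := prod_pos (by intros; omega)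
    have h2 : 0 < ∏ r ∈ range i, (3 * (m + r) + 4) := prod_pos (by intros; omega)
    positivity
  rw [← h] at this
  exact Nat.pos_of_mul_pos_right this

/-- the constant -/
noncomputable def kap (n : ℕ) : ℂ := -(9 ^ n * p2 0 n * p4 0 n)

lemma kap_ne (n : ℕ) : kap n ≠ 0 := by
  unfold kap p2 p4
  rw [neg_ne_zero]
  have h1 : 0 < ∏ r ∈ range n, (3 * (0 + r) + 2) := prod_pos (by intros; omega)
  have h2 : 0 < ∏ r ∈ range n, (3 * (0 + r) + 4) := prod_pos (by intros; omega)
  exact_mod_cast (by positivity : 9 ^ n * (∏ r ∈ range n, (3 * (0 + r) + 2)) * (∏ r ∈ range n, (3 * (0 + r) + 4)) ≠ 0)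

lemma p2_add (i m : ℕ) : p2 0 i * p2 i m = p2 0 (i + m) := by
  unfold p2; rw [prod_range_add]; simp
lemma p4_add (i m : ℕ) : p4 0 i * p4 i m = p4 0 (i + m) := by
  unfold p4; rw [prod_range_add]; simp

lemma prodW0 (i m : ℕ) : ∏ l ∈ range (i + 1 + m), (if l = i then (1:ℂ) else 3 * i - 3 * l)
    = 3 ^ (i + m) * (-1) ^ m * (i.factorial * m.factorial) := by
  rw [prod_range_add, prod_range_succ]
  have h1 : ∏ l ∈ range i, (if l = i then (1:ℂ) else 3 * i - 3 * l) = 3 ^ i * i.factorial := by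
    rw [← prod_range_reflect, ← prod_range_add_one_eq_factorial]
    push_cast
    rw [show (3:ℂ) ^ i = ∏ _r ∈ range i, (3:ℂ) by simp, ← prod_mul_distrib]
    apply prod_congr rfl
    intro l hl
    have hl := mem_range.1 hl
    rw [if_neg (by omega)]
    obtain ⟨t, rfl⟩ : ∃ t, i = l + 1 + t := ⟨i - 1 - l, by omega⟩
    rw [show l + 1 + t - 1 - l = t by omega]; push_cast; ring
  have h2 : ∏ x ∈ range m, (if i + 1 + x = i then (1:ℂ) else 3 * i - 3 * ((i + 1 + x : ℕ):ℂ)) = 3 ^ m * (-1) ^ m * m.factorial := by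
    rw [← prod_range_add_one_eq_factorial]
    push_cast
    rw [← mul_pow, show ((3:ℂ) * (-1)) ^ m = ∏ _r ∈ range m, ((3:ℂ) * (-1)) by simp, ← prod_mul_distrib]
    apply prod_congr rfl
    intro l hl
    rw [if_neg (by omega)]; ring
  rw [h1, h2]; simp; ring

lemma prodW1 (i m : ℕ) : ∏ l ∈ range (i + 1 + m), ((3 * i - 3 * l - 1) : ℂ)
    = -((-1) ^ m * (p2 0 i * p4 0 m)) := by
  rw [prod_range_add, prod_range_succ]
  have h1 : ∏ l ∈ range i, ((3 * i - 3 * l - 1) : ℂ) = p2 0 i := by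
    rw [← prod_range_reflect]
    unfold p2
    push_cast
    apply prod_congr rfl
    intro l hl
    have hl := mem_range.1 hl
    obtain ⟨t, rfl⟩ : ∃ t, i = l + 1 + t := ⟨i - 1 - l, by omega⟩
    rw [show l + 1 + t - 1 - l = t by omega]; push_cast; ring
  have h2 : ∏ x ∈ range m, ((3 * i - 3 * ((i + 1 + x : ℕ):ℂ) - 1)) = (-1) ^ m * p4 0 m := by
    unfold p4
    push_cast
    rw [show ((-1:ℂ)) ^ m = ∏ _r ∈ range m, ((-1:ℂ)) by simp, ← prod_mul_distrib]
    apply prod_congr rfl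
    intro l hl
    ring
  rw [h1, h2]; ring

lemma key0 (i m : ℕ) : (cc i m : ℂ) * ((∏ l ∈ range (i + 1 + m), (if l = i then (1:ℂ) else 3 * i - 3 * l)) *
   ∏ l ∈ range (i + 1 + m), ((3 * i - 3 * l - 1) : ℂ)) = kap (i + m) := by
  rw [prodW0, prodW1]
  have h := cc_eq i m
  have h' : (cc i m : ℂ) * (m.factorial * i.factorial) = 3 ^ (i + m) * p2 i m * p4 m i := by exact_mod_cast h
  have h2 : (p2 0 (i + m) : ℂ) = p2 0 i * p2 i m := by exact_mod_cast (p2_add i m).symm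
  have h4 : (p4 0 (i + m) : ℂ) = p4 0 m * p4 m i := by rw [add_comm i m]; exact_mod_cast (p4_add m i).symm
  have e : ((-1:ℂ)) ^ m * (-1) ^ m = 1 := by rw [← mul_pow]; simp
  unfold kap
  rw [h2, h4, show (9:ℂ) = 3 * 3 by norm_num, mul_pow]
  calc _ = -(3 ^ (i+m) * (((-1:ℂ)) ^ m * (-1) ^ m) * ((cc i m : ℂ) * (m.factorial * i.factorial)) * (p2 0 i * p4 0 m)) := by ring
    _ = _ := by rw [e, h']; ring

end Mord

namespace Mord
open Finset Polynomial

lemma key1 (i m : ℕ) : (cc m i : ℂ) * ((∏ l ∈ range (i + 1 + m), (if l = i then (1:ℂ) else 3 * i - 3 * l)) *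
   ∏ l ∈ range (i + 1 + m), ((3 * i + 1 - 3 * l) : ℂ)) = - kap (i + m) := by
  have h := key0 m i
  have e1 : (∏ l ∈ range (i + 1 + m), (if l = i then (1:ℂ) else 3 * i - 3 * l)) =
     (-1) ^ (i + m) * (∏ l ∈ range (m + 1 + i), (if l = m then (1:ℂ) else 3 * m - 3 * l)) := by
    rw [prodW0, prodW0]
    have e : ((-1:ℂ)) ^ i * (-1) ^ i = 1 := by rw [← mul_pow]; simp
    rw [pow_add]
    linear_combination (-(3:ℂ) ^ (i + m) * (-1) ^ m * (i.factorial * m.factorial)) * e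
  have e2 : ∏ l ∈ range (i + 1 + m), ((3 * i + 1 - 3 * l) : ℂ) = (-1) ^ (i + m + 1) *
      ∏ l ∈ range (m + 1 + i), ((3 * m - 3 * l - 1) : ℂ) := by
    rw [← prod_range_reflect, show m + 1 + i = i + 1 + m by ring, show i + m + 1 = i + 1 + m by ring]
    rw [show ((-1:ℂ)) ^ (i + 1 + m) = ∏ _r ∈ range (i + 1 + m), ((-1:ℂ)) by simp, ← prod_mul_distrib]
    apply prod_congr rfl
    intro l hl
    have hl := mem_range.1 hl
    have : ((i + 1 + m - 1 - l : ℕ) : ℂ) = i + m - l := by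
      rw [Nat.sub_sub, Nat.cast_sub (by omega)]; push_cast; ring
    rw [this]; ring
  rw [e1, e2, add_comm i m, ← h]
  have e : ((-1:ℂ)) ^ (m + i) * (-1) ^ (m + i) = 1 := by rw [← mul_pow]; simp
  rw [pow_succ]
  linear_combination (-(cc m i : ℂ) * (∏ l ∈ range (m + 1 + i), (if l = m then (1:ℂ) else 3 * m - 3 * l)) *  ∏ l ∈ range (m + 1 + i), ((3 * m - 3 * l - 1) : ℂ)) * e

lemma lag (n : ℕ) (g : ℂ[X]) (hg : g.natDegree < 2 * n + 1) :
    ∑ j ∈ range (n + 1), ((cc j (n - j) : ℂ) * g.eval (3 * j : ℂ) - (cc (n - j) j : ℂ) * g.eval (3 * j + 1 : ℂ)) = 0 := by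
  classical
  set s : Finset (ℕ × ℕ) := range (n + 1) ×ˢ range 2 with hs
  set v : ℕ × ℕ → ℂ := fun p => ((3 * p.1 + p.2 : ℕ) : ℂ) with hv
  have hinj : Set.InjOn v s := by
    rintro ⟨a, b⟩ h1 ⟨a', b'⟩ h2 h
    simp [hs] at h1 h2
    have : 3 * a + b = 3 * a' + b' := by
      simp only [hv] at h; exact_mod_cast h
    ext <;> simp <;> omega
  have hc : #s = 2 * n + 2 := by simp [hs]; ring
  have h := Lagrange.coeff_eq_sum hinj (P := g) (by
    rw [hc]; refine lt_of_le_of_lt degree_le_natDegree ?_; exact_mod_cast (by omega))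
  rw [hc, coeff_eq_zero_of_natDegree_lt (by omega)] at h
  have hpr : ∀ a ∈ s, ∏ j ∈ s.erase a, (v a - v j) = ∏ l ∈ range (n + 1), ((if (l, 0) = a then 1 else v a - v (l, 0)) * (if (l, 1) = a then 1 else v a - v (l, 1))) := by
    intro a ha
    have e1 : ∏ j ∈ s.erase a, (v a - v j) = ∏ j ∈ s, (if j = a then 1 else v a - v j) := by
      rw [← Finset.mul_prod_erase s (fun j => if j = a then 1 else v a - v j) ha, if_pos rfl, one_mul]
      apply prod_congr rfl; intro j hj; rw [if_neg (ne_of_mem_erase hj)]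
    rw [e1]
    rw [hs, prod_product]
    apply prod_congr rfl
    intro l _
    rw [prod_range_succ, prod_range_one]
  rw [sum_congr rfl (fun a ha => by rw [hpr a ha]), hs, sum_product] at h
  have h2 : ∑ x ∈ range (n + 1), ((cc x (n - x) : ℂ) * g.eval (3 * x : ℂ) - (cc (n - x) x : ℂ) * g.eval (3 * x + 1 : ℂ)) =
     kap n * 0 := by
    rw [h, mul_sum]
    apply sum_congr rfl
    intro i hi
    have hi := mem_range.1 hi
    obtain ⟨m, rfl⟩ : ∃ m, n = i + m := ⟨n - i, by omega⟩
    rw [sum_range_succ, sum_range_one, show i + m - i = m by omega, mul_add]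
    have k0 := key0 i m
    have k1 := key1 i m
    have hk := kap_ne (i + m)
    rw [sub_eq_add_neg]
    have q0 : ∏ l ∈ range (i + m + 1), ((if (l, 0) = (i, 0) then 1 else v (i, 0) - v (l, 0)) * (if (l, 1) = (i, 0) then 1 else v (i, 0) - v (l, 1))) = ((∏ l ∈ range (i + 1 + m), (if l = i then (1:ℂ) else 3 * i - 3 * l)) *
   ∏ l ∈ range (i + 1 + m), ((3 * i - 3 * l - 1) : ℂ)) := by
      rw [← prod_mul_distrib, show i + m + 1 = i + 1 + m by ring]
      apply prod_congr rfl
      intro l _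
      simp [hv, sub_sub]
    have q1 : ∏ l ∈ range (i + m + 1), ((if (l, 0) = (i, 1) then 1 else v (i, 1) - v (l, 0)) * (if (l, 1) = (i, 1) then 1 else v (i, 1) - v (l, 1))) = ((∏ l ∈ range (i + 1 + m), (if l = i then (1:ℂ) else 3 * i - 3 * l)) *
   ∏ l ∈ range (i + 1 + m), ((3 * i + 1 - 3 * l) : ℂ)) := by
      rw [← prod_mul_distrib, show i + m + 1 = i + 1 + m by ring]
      apply prod_congr rfl
      intro l _
      simp [hv, mul_comm]
    rw [q0, q1]
    congr 1
    · generalize hG : ((∏ l ∈ range (i + 1 + m), (if l = i then (1:ℂ) else 3 * i - 3 * l)) *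
   ∏ l ∈ range (i + 1 + m), ((3 * i - 3 * l - 1) : ℂ)) = G at *
      have hG0 : G ≠ 0 := by rintro rfl; simp at k0; exact hk k0.symm
      simp only [hv]; push_cast; rw [add_zero, ← k0]
      field_simp
    · generalize hG : ((∏ l ∈ range (i + 1 + m), (if l = i then (1:ℂ) else 3 * i - 3 * l)) *
   ∏ l ∈ range (i + 1 + m), ((3 * i + 1 - 3 * l) : ℂ)) = G at *
      have hG0 : G ≠ 0 := by rintro rfl; simp at k1; exact hk k1
      simp only [hv]; push_cast; rw [eq_neg_iff_add_eq_zero.2 (by rw [k1]; simp : kap (i+m) + (cc m i : ℂ) * G = 0)]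
      field_simp
  simpa using h2

noncomputable def Ap (n : ℕ) : ℂ[X] := ∑ j ∈ range (n + 1), C (cc j (n - j) : ℂ) * X ^ j
noncomputable def Bp (n : ℕ) : ℂ[X] := ∑ j ∈ range (n + 1), C (cc (n - j) j : ℂ) * X ^ j
noncomputable def Pp (n : ℕ) : ℂ[X] := (Ap n).comp (X ^ 3) - X * (Bp n).comp (X ^ 3)

lemma Pp_eq (n : ℕ) : Pp n = ∑ j ∈ range (n + 1), (monomial (3 * j) (cc j (n - j) : ℂ) - monomial (3 * j + 1) (cc (n - j) j : ℂ)) := by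
  unfold Pp Ap Bp
  rw [sum_sub_distrib]
  simp only [← C_mul_X_pow_eq_monomial]
  simp only [Polynomial.sum_comp, mul_comp, C_comp, pow_comp, X_comp, mul_sum]
  refine congrArg₂ (· - ·) (sum_congr rfl ?_) (sum_congr rfl ?_)
  · intro j _; rw [← pow_mul]
  · intro j _; rw [← pow_mul, pow_succ, mul_left_comm, mul_comm X]

lemma Pp_dvd (n : ℕ) : (X - C 1) ^ (2 * n + 1) ∣ Pp n := by
  rw [X_sub_C_pow_dvd_iff, X_pow_dvd_iff]
  intro r hr
  rw [← taylor_apply, taylor_coeff, Pp_eq]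
  rw [map_sum, eval_finsetSum]
  set g : ℂ[X] := C ((r.factorial : ℂ)⁻¹) * descPochhammer ℂ r with hg
  have hev : ∀ e : ℕ, g.eval (e : ℂ) = (e.choose r : ℂ) := by
    intro e
    rw [hg, eval_mul, eval_C, descPochhammer_eval_eq_descFactorial, Nat.descFactorial_eq_factorial_mul_choose]
    have : (r.factorial : ℂ) ≠ 0 := by exact_mod_cast Nat.factorial_ne_zero r
    push_cast; field_simp
  have hdeg : g.natDegree < 2 * n + 1 := by
    refine lt_of_le_of_lt (natDegree_C_mul_le _ _) ?_
    rw [descPochhammer_natDegree]; exact hr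
  rw [← lag n g hdeg]
  apply sum_congr rfl
  intro j _
  have h1 := hev (3 * j)
  have h2 := hev (3 * j + 1)
  push_cast at h1 h2
  rw [h1, h2, map_sub, hasseDeriv_monomial, hasseDeriv_monomial]
  simp [mul_comm]

end Mord

namespace Mord
open Finset Polynomial

noncomputable def Ah (n : ℕ) (x y : ℂ) : ℂ := ∑ j ∈ range (n + 1), (cc j (n - j) : ℂ) * (x ^ (n - j) * y ^ j)

lemma Ah_eval (n : ℕ) (x y : ℂ) (hx : x ≠ 0) : Ah n x y = x ^ n * (Ap n).eval (y / x) := by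
  unfold Ah Ap
  rw [eval_finsetSum, mul_sum]
  apply sum_congr rfl
  intro j hj
  obtain ⟨m, rfl⟩ : ∃ m, n = j + m := ⟨n - j, by have := mem_range.1 hj; omega⟩
  simp only [eval_mul, eval_C, eval_pow, eval_X]
  rw [show j + m - j = m by omega, div_pow, pow_add]
  field_simp

lemma Ah_eval' (n : ℕ) (x y : ℂ) (hx : x ≠ 0) : Ah n y x = x ^ n * (Bp n).eval (y / x) := by
  unfold Ah Bp
  rw [eval_finsetSum, mul_sum, ← sum_range_reflect]
  apply sum_congr rfl
  intro j hj
  obtain ⟨m, rfl⟩ : ∃ m, n = j + m := ⟨n - j, by have := mem_range.1 hj; omega⟩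
  simp only [eval_mul, eval_C, eval_pow, eval_X]
  rw [show j + m + 1 - 1 - j = m by omega, show j + m - j = m by omega, show j + m - m = j by omega, div_pow, pow_add]
  field_simp

lemma Ah_int (n : ℕ) (k y : ℤ) (s : ℂ) (hs : s ^ 2 = k) :
    ∃ a b : ℤ, Ah n (s + y) (y - s) = a + b * s ∧ Ah n (y - s) (s + y) = a - b * s := by
  have hmul : ∀ a b a' b' : ℤ, ∀ z w z' w' : ℂ, z = a + b * s → w = a - b * s → z' = a' + b' * s → w' = a' - b' * s →
      ∃ a'' b'' : ℤ, z * z' = a'' + b'' * s ∧ w * w' = a'' - b'' * s := by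
    intro a b a' b' z w z' w' h1 h2 h3 h4
    refine ⟨a * a' + b * b' * k, a * b' + a' * b, ?_, ?_⟩
    · rw [h1, h3]; push_cast; rw [← hs]; ring
    · rw [h2, h4]; push_cast; rw [← hs]; ring
  have hpow : ∀ z w : ℂ, (∃ a b : ℤ, z = a + b * s ∧ w = a - b * s) → ∀ m : ℕ, ∃ a b : ℤ, z ^ m = a + b * s ∧ w ^ m = a - b * s := by
    rintro z w ⟨a, b, h1, h2⟩ m
    induction m with
    | zero => exact ⟨1, 0, by simp, by simp⟩
    | succ m ih =>
      obtain ⟨a', b', h3, h4⟩ := ih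
      rw [pow_succ, pow_succ]
      exact hmul a' b' a b _ _ _ _ h3 h4 h1 h2
  unfold Ah
  induction range (n + 1) using Finset.induction_on with
  | empty => exact ⟨0, 0, by simp, by simp⟩
  | insert j t hj ih =>
    obtain ⟨a, b, h1, h2⟩ := ih
    rw [sum_insert hj, sum_insert hj, h1, h2]
    obtain ⟨a1, b1, h3, h4⟩ := hpow (s + y) (y - s) ⟨y, 1, by push_cast; ring, by push_cast; ring⟩ (n - j)
    obtain ⟨a2, b2, h5, h6⟩ := hpow (y - s) (s + y) ⟨y, -1, by push_cast; ring, by push_cast; ring⟩ j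
    obtain ⟨a3, b3, h7, h8⟩ := hmul _ _ _ _ _ _ _ _ h3 h4 h5 h6
    refine ⟨cc j (n - j) * a3 + a, cc j (n - j) * b3 + b, ?_, ?_⟩
    · rw [h7]; push_cast; ring
    · rw [h8]; push_cast; ring

lemma cc_leR (i m : ℕ) : (cc i m : ℝ) ≤ 2 * 36 ^ (i + m) := by exact_mod_cast cc_le i m

lemma Ah_norm (n : ℕ) (x y : ℂ) (M : ℝ) (hx : ‖x‖ ≤ M) (hy : ‖y‖ ≤ M) :
    ‖Ah n x y‖ ≤ 2 * (72 * M) ^ n := by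
  have hM : 0 ≤ M := (norm_nonneg _).trans hx
  unfold Ah
  calc _ ≤ ∑ j ∈ range (n + 1), (2 * 36 ^ n * M ^ n : ℝ) := by
        refine (norm_sum_le _ _).trans (sum_le_sum ?_)
        intro j hj
        obtain ⟨m, rfl⟩ : ∃ m, n = j + m := ⟨n - j, by have := mem_range.1 hj; omega⟩
        rw [show j + m - j = m by omega]
        rw [norm_mul, norm_mul, norm_pow, norm_pow, Complex.norm_natCast]
        have : (M:ℝ) ^ (j + m) = M ^ m * M ^ j := by rw [pow_add]; ring
        rw [this]
        gcongr
        exact cc_leR j m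
    _ = (n + 1 : ℕ) * (2 * 36 ^ n * M ^ n : ℝ) := by simp
    _ ≤ (2 ^ n : ℕ) * (2 * 36 ^ n * M ^ n : ℝ) := by
        gcongr
        exact Nat.lt_two_pow_self
    _ = _ := by
        rw [show (72 * M) = 2 * 36 * M by norm_num, mul_pow, mul_pow]; push_cast; ring

lemma Pp_eval (n : ℕ) (z : ℂ) : (Pp n).eval z = Ah n 1 (z ^ 3) - z * Ah n (z ^ 3) 1 := by
  rw [Ah_eval n 1 _ one_ne_zero, Ah_eval' n 1 _ one_ne_zero]
  simp [Pp]

lemma Pp_bound (n : ℕ) (z : ℂ) (hz : ‖z - 1‖ ≤ 1) : ‖(Pp n).eval z‖ ≤ 6 * 576 ^ n * ‖z - 1‖ ^ (2 * n + 1) := by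
  obtain ⟨E, hE⟩ := Pp_dvd n
  have key : ‖E.eval z‖ ≤ 6 * 576 ^ n := by
    apply Complex.norm_le_of_forall_mem_frontier_norm_le (f := fun z => E.eval z) (U := Metric.ball (1:ℂ) 1)
      Metric.isBounded_ball (E.differentiable.diffContOnCl)
    · intro w hw
      rw [frontier_ball _ one_ne_zero, mem_sphere_iff_norm] at hw
      have h1 : (Pp n).eval w = (w - 1) ^ (2 * n + 1) * E.eval w := by rw [hE]; simp
      have h2 : ‖(Pp n).eval w‖ = ‖E.eval w‖ := by rw [h1, norm_mul, norm_pow, hw]; simp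
      rw [← h2, Pp_eval]
      have hw2 : ‖w‖ ≤ 2 := by
        calc ‖w‖ = ‖(w - 1) + 1‖ := by simp
          _ ≤ ‖w - 1‖ + ‖(1:ℂ)‖ := norm_add_le _ _
          _ = 2 := by rw [hw]; norm_num
      have hw3 : ‖w ^ 3‖ ≤ 8 := by
        rw [norm_pow]; calc ‖w‖ ^ 3 ≤ 2 ^ 3 := by gcongr
          _ = 8 := by norm_num
      have h11 : ‖(1:ℂ)‖ ≤ 8 := by norm_num
      have a1 := Ah_norm n 1 (w ^ 3) 8 h11 hw3
      have a2 := Ah_norm n (w ^ 3) 1 8 hw3 h11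
      calc _ ≤ ‖Ah n 1 (w ^ 3)‖ + ‖w * Ah n (w ^ 3) 1‖ := norm_sub_le _ _
        _ ≤ 2 * (72 * 8) ^ n + 2 * (2 * (72 * 8) ^ n) := by rw [norm_mul]; gcongr
        _ = _ := by norm_num; ring
    · rw [closure_ball _ one_ne_zero, mem_closedBall_iff_norm]; exact hz
  rw [hE]
  simp only [eval_mul, eval_pow, eval_sub, eval_X, eval_C, norm_mul, norm_pow]
  rw [mul_comm]
  gcongr

lemma Ah_approx (n : ℕ) (u v : ℂ) (hv : v ≠ 0) (huv : ‖u + v‖ ≤ ‖v‖) :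
    ‖v * Ah n (v ^ 3) (-u ^ 3) + u * Ah n (-u ^ 3) (v ^ 3)‖ ≤ 6 * 576 ^ n * (‖v‖ ^ n * ‖u + v‖ ^ (2 * n + 1)) := by
  have hv3 : v ^ 3 ≠ 0 := pow_ne_zero _ hv
  have h1 : v * Ah n (v ^ 3) (-u ^ 3) + u * Ah n (-u ^ 3) (v ^ 3) = v ^ (3 * n + 1) * (Pp n).eval (-u / v) := by
    rw [Ah_eval n _ _ hv3, Ah_eval' n _ _ hv3]
    simp only [Pp, eval_sub, eval_mul, eval_X, eval_comp, eval_pow]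
    rw [show (-u / v) ^ 3 = -u ^ 3 / v ^ 3 by rw [div_pow]; ring, pow_succ v (3 * n), pow_mul]
    generalize eval (-u ^ 3 / v ^ 3) (Ap n) = a
    generalize eval (-u ^ 3 / v ^ 3) (Bp n) = b
    field_simp
    ring
  have hz : ‖-u / v - 1‖ = ‖u + v‖ / ‖v‖ := by
    rw [← norm_div, ← norm_neg]; congr 1; field_simp; ring
  have hv' : 0 < ‖v‖ := norm_pos_iff.2 hv
  have := Pp_bound n (-u / v) (by rw [hz, div_le_one hv']; exact huv)
  rw [h1, norm_mul, norm_pow]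
  calc _ ≤ ‖v‖ ^ (3 * n + 1) * (6 * 576 ^ n * ‖-u / v - 1‖ ^ (2 * n + 1)) := by gcongr
    _ = _ := by
      rw [hz, div_pow, show 3 * n + 1 = n + (2 * n + 1) by ring, pow_add]
      field_simp

lemma natDegree_Ap (n : ℕ) : (Ap n).natDegree ≤ n := by
  unfold Ap
  apply natDegree_sum_le_of_forall_le
  intro j hj
  exact (natDegree_C_mul_X_pow_le _ _).trans (by have := mem_range.1 hj; omega)
lemma natDegree_Bp (n : ℕ) : (Bp n).natDegree ≤ n := by
  unfold Bp
  apply natDegree_sum_le_of_forall_le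
  intro j hj
  exact (natDegree_C_mul_X_pow_le _ _).trans (by have := mem_range.1 hj; omega)

noncomputable def Dp (n : ℕ) : ℂ[X] := Ap n * Bp (n + 1) - Ap (n + 1) * Bp n

lemma cc_step (n : ℕ) : (cc 0 n : ℤ) * cc (n + 1) 0 ≠ cc 0 (n + 1) * cc n 0 := by
  -- cc 0 n * n! = 3^n p2 0 n ; cc n 0 * n! = 3^n p4 0 n
  have h1 := cc_eq 0 n
  have h2 := cc_eq n 0
  have h3 := cc_eq 0 (n + 1)
  have h4 := cc_eq (n + 1) 0
  have e2 : p2 0 (n + 1) = p2 0 n * (3 * n + 2) := by unfold p2; rw [prod_range_succ]; simp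
  have e4 : p4 0 (n + 1) = p4 0 n * (3 * n + 4) := by unfold p4; rw [prod_range_succ]; simp
  have z2 : p2 (n + 1) 0 = 1 := by simp [p2]
  have z2' : p2 n 0 = 1 := by simp [p2]
  have z4 : p4 (n + 1) 0 = 1 := by simp [p4]
  have z4' : p4 n 0 = 1 := by simp [p4]
  simp only [z2, z2', z4, z4', e2, e4, Nat.factorial_zero, mul_one, one_mul, zero_add, add_zero] at h1 h2 h3 h4
  intro h
  have hp2 : 0 < p2 0 n := prod_pos (by intros; omega)
  have hp4 : 0 < p4 0 n := prod_pos (by intros; omega)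
  have h' : cc 0 n * cc (n + 1) 0 = cc 0 (n + 1) * cc n 0 := by exact_mod_cast h
  have : (3 ^ n * p2 0 n) * (3 ^ (n + 1) * (p4 0 n * (3 * n + 4))) = (3 ^ (n + 1) * (p2 0 n * (3 * n + 2))) * (3 ^ n * p4 0 n) := by
    rw [← h1, ← h2, ← h3, ← h4]
    calc _ = (cc 0 n * cc (n + 1) 0) * (n.factorial * (n+1).factorial) := by ring
      _ = _ := by rw [h']; ring
  have hpos : 0 < 3 ^ n * 3 ^ (n + 1) * p2 0 n * p4 0 n := by positivity
  have : (3 ^ n * 3 ^ (n + 1) * p2 0 n * p4 0 n) * (3 * n + 4) = (3 ^ n * 3 ^ (n + 1) * p2 0 n * p4 0 n) * (3 * n + 2) := by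
    linarith
  have := Nat.eq_of_mul_eq_mul_left hpos this
  omega

lemma Dp_ne (n : ℕ) : Dp n ≠ 0 := by
  intro h
  have h0 : (Dp n).eval 0 = 0 := by rw [h]; simp
  have ea : ∀ m, (Ap m).eval 0 = cc 0 m := by
    intro m; unfold Ap; rw [eval_finsetSum, sum_range_succ']; simp
  have eb : ∀ m, (Bp m).eval 0 = cc m 0 := by
    intro m; unfold Bp; rw [eval_finsetSum, sum_range_succ']; simp
  simp only [Dp, eval_sub, eval_mul, ea, eb] at h0
  apply cc_step n
  exact_mod_cast sub_eq_zero.1 h0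

lemma Dp_eval_ne (n : ℕ) (w : ℂ) (hw : w ≠ 1) : (Dp n).eval w ≠ 0 := by
  intro h0
  have hD := Dp_ne n
  have hdeg : (Dp n).natDegree ≤ 2 * n + 1 := by
    unfold Dp
    refine (natDegree_sub_le _ _).trans (max_le ?_ ?_)
    · refine natDegree_mul_le.trans ?_
      have := natDegree_Ap n; have := natDegree_Bp (n+1); omega
    · refine natDegree_mul_le.trans ?_
      have := natDegree_Ap (n+1); have := natDegree_Bp n; omega
  -- divisibility of the composition
  have hdvd : (X - C 1) ^ (2 * n + 1) ∣ (Dp n).comp (X ^ 3) := by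
    have : (Dp n).comp (X ^ 3) = Pp n * (Bp (n + 1)).comp (X ^ 3) - Pp (n + 1) * (Bp n).comp (X ^ 3) := by
      simp only [Dp, Pp, sub_comp, mul_comp]; ring
    rw [this]
    refine dvd_sub (dvd_mul_of_dvd_left (Pp_dvd n) _) (dvd_mul_of_dvd_left ?_ _)
    exact (pow_dvd_pow _ (by omega)).trans (Pp_dvd (n + 1))
  set m := rootMultiplicity 1 (Dp n) with hm
  obtain ⟨G, hG, hG1⟩ := exists_eq_pow_rootMultiplicity_mul_and_not_dvd (Dp n) hD 1
  rw [← hm] at hG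
  have hG1' : G.eval 1 ≠ 0 := by
    intro h; exact hG1 (dvd_iff_isRoot.2 h)
  have hm2 : 2 * n + 1 ≤ m := by
    have hcomp : (Dp n).comp (X ^ 3) = (X - C 1) ^ m * ((X ^ 2 + X + 1) ^ m * G.comp (X ^ 3)) := by
      conv_lhs => rw [hG]
      simp only [mul_comp, pow_comp, sub_comp, X_comp, C_comp]
      rw [← mul_assoc, ← mul_pow]
      congr 2
      simp only [map_one]; ring
    by_contra hlt
    push Not at hlt
    obtain ⟨Q, hQ⟩ := hdvd
    rw [hcomp, show 2 * n + 1 = m + (2 * n + 1 - m) by omega, pow_add, mul_assoc] at hQ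
    have hne : (X - C (1:ℂ)) ^ m ≠ 0 := pow_ne_zero _ (X_sub_C_ne_zero 1)
    have := mul_left_cancel₀ hne hQ
    have := congrArg (eval 1) this
    simp only [eval_mul, eval_pow, eval_add, eval_X, eval_one, eval_comp, eval_sub, eval_C, one_pow, sub_self] at this
    rw [zero_pow (by omega), zero_mul] at this
    rcases mul_eq_zero.1 this with h | h
    · exact pow_ne_zero m (by norm_num) h
    · exact hG1' h
  have hGne : G ≠ 0 := by rintro rfl; simp at hG1'
  have hdG : G.natDegree = 0 := by
    have h1 : (Dp n).natDegree = m + G.natDegree := by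
      conv_lhs => rw [hG]
      rw [natDegree_mul (pow_ne_zero _ (X_sub_C_ne_zero 1)) hGne, natDegree_pow, natDegree_X_sub_C, mul_one]
    omega
  obtain ⟨g, rfl⟩ := natDegree_eq_zero.1 hdG
  rw [hG] at h0
  simp only [eval_mul, eval_pow, eval_sub, eval_X, eval_C] at h0 hG1'
  rcases mul_eq_zero.1 h0 with h | h
  · exact hw (sub_eq_zero.1 (pow_eq_zero_iff (by omega : m ≠ 0) |>.1 h))
  · exact hG1' h

lemma Ah_det (n : ℕ) (x y : ℂ) (hx : x ≠ 0) (hxy : x ≠ y) :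
    Ah n x y * Ah (n + 1) y x - Ah (n + 1) x y * Ah n y x ≠ 0 := by
  have h := Dp_eval_ne n (y / x) (by rw [Ne, div_eq_one_iff_eq hx]; exact hxy.symm)
  rw [Ah_eval n x y hx, Ah_eval (n+1) x y hx, Ah_eval' n x y hx, Ah_eval' (n+1) x y hx]
  have : x ^ n * (Ap n).eval (y / x) * (x ^ (n + 1) * (Bp (n + 1)).eval (y / x)) - x ^ (n + 1) * (Ap (n + 1)).eval (y / x) * (x ^ n * (Bp n).eval (y / x)) = x ^ n * x ^ (n + 1) * (Dp n).eval (y / x) := by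
    simp [Dp]; ring
  rw [this]
  exact mul_ne_zero (mul_ne_zero (pow_ne_zero _ hx) (pow_ne_zero _ hx)) h

end Mord

namespace Mord
open Finset

structure Good (k : ℤ) (s : ℂ) (x y : ℤ) (u v : ℂ) : Prop where
  hs : s ^ 2 = k
  hk : 10 ^ 12 ≤ |k|
  hx : |k| ≤ 8 * x
  hy : y ^ 2 = x ^ 3 + k
  h3 : u ^ 3 + v ^ 3 = 2 * s
  huv : u * v = -x
  hmin : ∀ w : ℂ, w ^ 3 = 1 → ‖u + v‖ ≤ ‖u + w * v‖

lemma exists_omega : ∃ w : ℂ, w ^ 2 + w + 1 = 0 := by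
  have h := (Complex.isPrimitiveRoot_exp 3 (by norm_num)).geom_sum_eq_zero (by norm_num)
  refine ⟨Complex.exp (2 * Real.pi * Complex.I / (3:ℕ)), ?_⟩
  simp only [sum_range_succ, sum_range_zero] at h
  linear_combination h

lemma lsq {a b : ℝ} (h : a ^ 2 ≤ b ^ 2) (hb : 0 ≤ b) : a ≤ b :=
  le_of_pow_le_pow_left₀ two_ne_zero hb h

lemma Good.y' {k : ℤ} {s : ℂ} {x y : ℤ} {u v : ℂ} (h : Good k s x y u v) :
    ∃ y' : ℤ, y' ^ 2 = x ^ 3 + k ∧ v ^ 3 = s + y' ∧ u ^ 3 = s - y' := by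
  have h1 : (v ^ 3 - u ^ 3) ^ 2 = (2 * y : ℂ) ^ 2 := by
    have hy : (y : ℂ) ^ 2 = x ^ 3 + k := by exact_mod_cast h.hy
    have e : (v ^ 3 - u ^ 3) ^ 2 = (u ^ 3 + v ^ 3) ^ 2 - 4 * (u * v) ^ 3 := by ring
    rw [e, h.h3, h.huv]
    linear_combination 4 * h.hs - 4 * hy
  rcases sq_eq_sq_iff_eq_or_eq_neg.1 h1 with e | e
  · refine ⟨y, h.hy, ?_, ?_⟩
    · linear_combination (1/2) * e + (1/2) * h.h3
    · linear_combination (-1/2) * e + (1/2) * h.h3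
  · refine ⟨-y, by rw [neg_sq]; exact h.hy, ?_, ?_⟩
    · push_cast; linear_combination (1/2) * e + (1/2) * h.h3
    · push_cast; linear_combination (-1/2) * e + (1/2) * h.h3

lemma Good.xbig {k : ℤ} {s : ℂ} {x y : ℤ} {u v : ℂ} (h : Good k s x y u v) : (10:ℝ) ^ 11 ≤ x := by
  have h1 := h.hk
  have h2 := h.hx
  have : (10:ℤ) ^ 11 ≤ x := by norm_num at h1 ⊢; omega
  exact_mod_cast this

lemma Good.s2 {k : ℤ} {s : ℂ} {x y : ℤ} {u v : ℂ} (h : Good k s x y u v) : ‖s‖ ^ 2 = |(k:ℝ)| := by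
  rw [← norm_pow, h.hs, Complex.norm_intCast]

lemma Good.spos {k : ℤ} {s : ℂ} {x y : ℤ} {u v : ℂ} (h : Good k s x y u v) : 0 < ‖s‖ := by
  rw [norm_pos_iff]
  rintro rfl
  have := h.hs
  have h2 := h.hk
  have : k = 0 := by exact_mod_cast (by simpa using this.symm : (k:ℂ) = 0)
  subst this; norm_num at h2

lemma Good.le {k : ℤ} {s : ℂ} {x y : ℤ} {u v : ℂ} (h : Good k s x y u v) : ‖u‖ ^ 2 ≤ 2 * x ∧ ‖v‖ ^ 2 ≤ 2 * x := by
  obtain ⟨y', hy, hv, hu⟩ := h.y'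
  have hxb := h.xbig
  have hyR : (y' : ℝ) ^ 2 = x ^ 3 + k := by exact_mod_cast hy
  have hxk : |(k : ℝ)| ≤ 8 * x := by exact_mod_cast h.hx
  have hs2 := h.s2
  have main : ∀ z : ℂ, ‖z‖ ^ 3 ≤ ‖s‖ + |(y' : ℝ)| → ‖z‖ ^ 2 ≤ 2 * x := by
    intro z hz
    have h6 : (‖z‖ ^ 2) ^ 3 ≤ (2 * (x:ℝ)) ^ 3 := by
      calc (‖z‖ ^ 2) ^ 3 = (‖z‖ ^ 3) ^ 2 := by ring
        _ ≤ (‖s‖ + |(y' : ℝ)|) ^ 2 := by gcongr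
        _ ≤ 2 * (‖s‖ ^ 2 + |(y' : ℝ)| ^ 2) := by nlinarith [sq_nonneg (‖s‖ - |(y' : ℝ)|)]
        _ = 2 * (|(k:ℝ)| + (x ^ 3 + k)) := by rw [hs2, sq_abs, hyR]
        _ ≤ 2 * (8 * x + (x ^ 3 + 8 * x)) := by
            have := le_abs_self (k:ℝ); linarith
        _ ≤ _ := by
            have : (x:ℝ) * 100 ≤ x ^ 3 := by nlinarith [sq_nonneg ((x:ℝ))]
            nlinarith
    exact le_of_pow_le_pow_left₀ (by norm_num) (by positivity) h6
  constructor
  · apply main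
    rw [← norm_pow, hu]
    refine (norm_sub_le _ _).trans ?_
    rw [Complex.norm_intCast]
  · apply main
    rw [← norm_pow, hv]
    refine (norm_add_le _ _).trans ?_
    rw [Complex.norm_intCast]

lemma Good.ge {k : ℤ} {s : ℂ} {x y : ℤ} {u v : ℂ} (h : Good k s x y u v) : (x:ℝ) / 2 ≤ ‖v‖ ^ 2 := by
  have hxb := h.xbig
  have h1 := h.le.1
  have h2 : ‖u‖ * ‖v‖ = x := by
    rw [← norm_mul, h.huv, norm_neg, Complex.norm_intCast, abs_of_pos (by linarith)]
  have h3 : (x:ℝ) ^ 2 = ‖u‖ ^ 2 * ‖v‖ ^ 2 := by rw [← h2]; ring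
  have h4 : (x:ℝ) ^ 2 ≤ 2 * x * ‖v‖ ^ 2 := by rw [h3]; gcongr
  nlinarith

lemma Good.del {k : ℤ} {s : ℂ} {x y : ℤ} {u v : ℂ} (h : Good k s x y u v) : ‖u + v‖ * x ≤ 6 * ‖s‖ := by
  obtain ⟨w, hw⟩ := exists_omega
  have hxb := h.xbig
  have hw3 : w ^ 3 = 1 := by linear_combination (w - 1) * hw
  have hw6 : (w ^ 2) ^ 3 = 1 := by linear_combination (w ^ 3 + 1) * hw3
  have m1 := h.hmin w hw3
  have m2 := h.hmin (w ^ 2) hw6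
  have hp : (u + v) * ((u + w * v) * (u + w ^ 2 * v)) = 2 * s := by
    rw [← h.h3]; linear_combination (u ^ 2 * v + w * u * v ^ 2 ) * hw + (v ^ 3) * hw3
  have b1 : ‖1 - w‖ * ‖v‖ ≤ 2 * ‖u + w * v‖ := by
    rw [← norm_mul, show (1 - w) * v = (u + v) - (u + w * v) by ring]
    refine (norm_sub_le _ _).trans ?_
    linarith
  have b2 : ‖1 - w ^ 2‖ * ‖v‖ ≤ 2 * ‖u + w ^ 2 * v‖ := by
    rw [← norm_mul, show (1 - w ^ 2) * v = (u + v) - (u + w ^ 2 * v) by ring]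
    refine (norm_sub_le _ _).trans ?_
    linarith
  have b3 : ‖1 - w‖ * ‖1 - w ^ 2‖ = 3 := by
    rw [← norm_mul, show (1 - w) * (1 - w ^ 2) = 3 by linear_combination (w - 2) * hw]; norm_num
  have b4 : 3 * ‖v‖ ^ 2 ≤ 4 * ‖(u + w * v) * (u + w ^ 2 * v)‖ := by
    rw [norm_mul, ← b3]
    calc _ = (‖1 - w‖ * ‖v‖) * (‖1 - w ^ 2‖ * ‖v‖) := by ring
      _ ≤ (2 * ‖u + w * v‖) * (2 * ‖u + w ^ 2 * v‖) := by gcongr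
      _ = _ := by ring
  have b5 : ‖u + v‖ * ‖(u + w * v) * (u + w ^ 2 * v)‖ = 2 * ‖s‖ := by
    rw [← norm_mul, hp]; simp
  have hge := h.ge
  have : 3 / 8 * (x:ℝ) ≤ ‖(u + w * v) * (u + w ^ 2 * v)‖ := by linarith
  have := mul_le_mul_of_nonneg_left this (norm_nonneg (u + v))
  rw [b5] at this
  have : 0 ≤ ‖s‖ := norm_nonneg s
  linarith

lemma gap {k : ℤ} {s : ℂ} {x₁ y₁ x₂ y₂ : ℤ} {u₁ v₁ u₂ v₂ : ℂ} (h₁ : Good k s x₁ y₁ u₁ v₁)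
    (h₂ : Good k s x₂ y₂ u₂ v₂) (hle : x₁ ≤ x₂) (m : ℤ) (hm : m ≠ 0) (hd : u₁ * v₂ - u₂ * v₁ = 2 * s * m) :
    x₁ ^ 2 ≤ 100 * x₂ := by
  have hs := h₁.spos
  have x1 := h₁.xbig
  have x2 := h₂.xbig
  have hleR : (x₁ : ℝ) ≤ x₂ := by exact_mod_cast hle
  have d1 := h₁.del
  have d2 := h₂.del
  have l1 := h₁.le.2
  have l2 := h₂.le.2
  have hm1 : (1:ℝ) ≤ |(m:ℝ)| := by exact_mod_cast Int.one_le_abs hm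
  have a : 2 * ‖s‖ ≤ ‖u₁ + v₁‖ * ‖v₂‖ + ‖u₂ + v₂‖ * ‖v₁‖ := by
    calc 2 * ‖s‖ ≤ 2 * ‖s‖ * |(m:ℝ)| := by nlinarith
      _ = ‖u₁ * v₂ - u₂ * v₁‖ := by rw [hd, norm_mul, norm_mul, Complex.norm_intCast]; simp
      _ = ‖(u₁ + v₁) * v₂ - (u₂ + v₂) * v₁‖ := by congr 1; ring
      _ ≤ _ := by rw [← norm_mul, ← norm_mul]; exact norm_sub_le _ _
  set r₁ := √(x₁ : ℝ)
  set r₂ := √(x₂ : ℝ)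
  have hr1 : r₁ ^ 2 = x₁ := Real.sq_sqrt (by linarith)
  have hr2 : r₂ ^ 2 = x₂ := Real.sq_sqrt (by linarith)
  have r1p : 0 ≤ r₁ := Real.sqrt_nonneg _
  have r2p : 0 ≤ r₂ := Real.sqrt_nonneg _
  have r1b : 100 ≤ r₁ := Real.le_sqrt_of_sq_le (by norm_num; linarith)
  have r12 : r₁ ≤ r₂ := Real.sqrt_le_sqrt hleR
  have v1 : ‖v₁‖ ≤ 3/2 * r₁ := by
    refine lsq ?_ (by positivity)
    rw [mul_pow, hr1]; linarith
  have v2 : ‖v₂‖ ≤ 3/2 * r₂ := by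
    refine lsq ?_ (by positivity)
    rw [mul_pow, hr2]; linarith
  have e1 : ‖u₁ + v₁‖ ≤ 6 * ‖s‖ / r₁ ^ 2 := by rw [le_div_iff₀ (by positivity), hr1]; exact d1
  have e2 : ‖u₂ + v₂‖ ≤ 6 * ‖s‖ / r₂ ^ 2 := by rw [le_div_iff₀ (by positivity), hr2]; exact d2
  have b : 2 * ‖s‖ ≤ 6 * ‖s‖ / r₁ ^ 2 * (3/2 * r₂) + 6 * ‖s‖ / r₂ ^ 2 * (3/2 * r₁) := by
    refine a.trans ?_
    gcongr
  have c : 1 ≤ 9/2 * (r₂ / r₁ ^ 2 + r₁ / r₂ ^ 2) := by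
    have : 2 * ‖s‖ * 1 ≤ 2 * ‖s‖ * (9/2 * (r₂ / r₁ ^ 2 + r₁ / r₂ ^ 2)) := by
      calc _ = 2 * ‖s‖ := by ring
        _ ≤ _ := b
        _ = _ := by ring
    exact le_of_mul_le_mul_left this (by positivity)
  have c2 : r₁ / r₂ ^ 2 ≤ 1 / 100 := by
    rw [div_le_div_iff₀ (by positivity) (by norm_num)]
    nlinarith
  have c3 : 1/10 ≤ r₂ / r₁ ^ 2 := by linarith
  rw [le_div_iff₀ (by positivity)] at c3
  have c4 : (x₁ : ℝ) ^ 2 ≤ 100 * x₂ := by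
    rw [← hr1, ← hr2]; nlinarith
  exact_mod_cast c4

lemma thue {k : ℤ} {s : ℂ} {x₁ y₁ x₂ y₂ : ℤ} {u₁ v₁ u₂ v₂ : ℂ} (h₁ : Good k s x₁ y₁ u₁ v₁)
    (h₂ : Good k s x₂ y₂ u₂ v₂) (m S : ℤ) (hd : u₁ * v₂ - u₂ * v₁ = 2 * s * m)
    (hS : u₁ * v₂ + u₂ * v₁ = S) (hbig : (31104 * |k|) ^ 16 ≤ x₁) (hfar : x₁ ^ 7 ≤ x₂) : False := by
  obtain ⟨y, hy, hv, hu⟩ := h₁.y'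
  have hs := h₁.spos
  have x1 := h₁.xbig
  have x2 := h₂.xbig
  have d1 := h₁.del
  have d2 := h₂.del
  have hs2 := h₁.s2
  set r := √(x₁ : ℝ)
  set r₂ := √(x₂ : ℝ)
  have hr1 : r ^ 2 = x₁ := Real.sq_sqrt (by linarith)
  have hr2 : r₂ ^ 2 = x₂ := Real.sq_sqrt (by linarith)
  have r1b : 100 ≤ r := Real.le_sqrt_of_sq_le (by norm_num; linarith)
  have r2b : 100 ≤ r₂ := Real.le_sqrt_of_sq_le (by norm_num; linarith)
  have hle : ∀ z : ℂ, ‖z‖ ^ 2 ≤ 2 * x₁ → ‖z‖ ≤ 3/2 * r := by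
    intro z hz
    refine lsq ?_ (by positivity)
    rw [mul_pow, hr1]; linarith
  have u1 := hle _ h₁.le.1
  have v1 := hle _ h₁.le.2
  have u2 : ‖u₂‖ ≤ 3/2 * r₂ := by
    refine lsq ?_ (by positivity)
    rw [mul_pow, hr2]; linarith [h₂.le.1]
  have e1 : ‖u₁ + v₁‖ ≤ 6 * ‖s‖ / r ^ 2 := by rw [le_div_iff₀ (by positivity), hr1]; exact d1
  have e2 : ‖u₂ + v₂‖ ≤ 6 * ‖s‖ / r₂ ^ 2 := by rw [le_div_iff₀ (by positivity), hr2]; exact d2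
  set T : ℝ := 31104 * |(k:ℝ)| with hT
  have hk1 : (10:ℝ) ^ 12 ≤ |(k:ℝ)| := by exact_mod_cast h₁.hk
  have hT1 : 31104 ≤ T := by rw [hT]; linarith
  have hrT : T ^ 8 ≤ r := by
    apply Real.le_sqrt_of_sq_le
    rw [← pow_mul, hT]
    exact_mod_cast hbig
  have hrr : r ^ 7 ≤ r₂ := by
    apply Real.le_sqrt_of_sq_le
    rw [← pow_mul, mul_comm, pow_mul, hr1]
    exact_mod_cast hfar
  have hxk : |(k : ℝ)| ≤ 8 * x₁ := by exact_mod_cast h₁.hx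
  have vne : v₁ ≠ 0 := by
    rintro rfl
    have := h₁.ge
    simp at this; linarith
  have une : u₁ ≠ 0 := by
    rintro rfl
    have := h₁.huv
    simp at this
    rw [this] at x1; norm_num at x1
  have v2ne : v₂ ≠ 0 := by
    rintro rfl
    have := h₂.ge
    simp at this; linarith
  have huv : ‖u₁ + v₁‖ ≤ ‖v₁‖ := by
    have hg := h₁.ge
    refine lsq ?_ (norm_nonneg _)
    refine le_trans ?_ hg
    calc ‖u₁ + v₁‖ ^ 2 ≤ (6 * ‖s‖ / r ^ 2) ^ 2 := by gcongr
      _ = 36 * |(k:ℝ)| / x₁ ^ 2 := by rw [div_pow, mul_pow, hs2, hr1]; norm_num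
      _ ≤ _ := by
        rw [div_le_div_iff₀ (by positivity) (by norm_num)]
        nlinarith [sq_nonneg (x₁:ℝ)]
  -- the linear forms
  set A : ℕ → ℂ := fun n => Ah n (v₁ ^ 3) (-u₁ ^ 3) with hA
  set B : ℕ → ℂ := fun n => Ah n (-u₁ ^ 3) (v₁ ^ 3) with hB
  have bound : ∀ n : ℕ, ‖A n * (v₁ * u₂) - B n * (u₁ * v₂)‖ ≤
      54 * ‖s‖ * (r₂ / r ^ 2 * (T / r ^ 3) ^ n) + 18 * ‖s‖ * (r * (243 * r ^ 3) ^ n / r₂ ^ 2) := by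
    intro n
    have t1 := Ah_approx n u₁ v₁ vne huv
    have t2 := Ah_norm n (-u₁ ^ 3) (v₁ ^ 3) ((3/2 * r) ^ 3) (by rw [norm_neg, norm_pow]; gcongr) (by rw [norm_pow]; gcongr)
    have e : A n * (v₁ * u₂) - B n * (u₁ * v₂) = u₂ * (v₁ * A n + u₁ * B n) - u₁ * B n * (u₂ + v₂) := by ring
    rw [e]
    refine (norm_sub_le _ _).trans (add_le_add ?_ ?_)
    · rw [norm_mul]
      calc _ ≤ (3/2 * r₂) * (6 * 576 ^ n * (‖v₁‖ ^ n * ‖u₁ + v₁‖ ^ (2 * n + 1))) := by gcongr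
        _ ≤ (3/2 * r₂) * (6 * 576 ^ n * ((3/2 * r) ^ n * (6 * ‖s‖ / r ^ 2) ^ (2 * n + 1))) := by gcongr
        _ = 54 * ‖s‖ * (r₂ / r ^ 2 * (576 ^ n * (3/2 * r) ^ n * ((6 * ‖s‖ / r ^ 2) ^ 2) ^ n)) := by
            rw [pow_succ, pow_mul]; ring
        _ = _ := by
            have h0 : 576 * (3/2 * r) * (6 * ‖s‖ / r ^ 2) ^ 2 = T / r ^ 3 := by
              rw [div_pow, mul_pow, hs2, hT]
              field_simp; norm_num
            rw [← mul_pow, ← mul_pow, h0]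
    · rw [norm_mul, norm_mul]
      calc _ ≤ (3/2 * r) * (2 * (72 * (3/2 * r) ^ 3) ^ n) * (6 * ‖s‖ / r₂ ^ 2) := by gcongr
        _ = _ := by
          rw [show 72 * (3/2 * r) ^ 3 = 243 * r ^ 3 by ring]; ring
  have zero : ∀ n : ℕ, r₂ * T ^ (n + 1) < r ^ (3 * n + 2) → r ^ (3 * n + 1) * T ^ (n + 1) < r₂ ^ 2 →
      A n * (v₁ * u₂) = B n * (u₁ * v₂) := by
    intro n c1 c2
    by_contra hne
    have hne : A n * (v₁ * u₂) - B n * (u₁ * v₂) ≠ 0 := sub_ne_zero.2 hne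
    obtain ⟨a, b, ha, hb⟩ := Ah_int n k y s h₁.hs
    have hAn : A n = a + b * s := by
      rw [← ha, hA]; simp only; rw [hv, hu]; congr 1; ring
    have hBn : B n = a - b * s := by
      rw [← hb, hB]; simp only; rw [hv, hu]; congr 1; ring
    have eL : A n * (v₁ * u₂) - B n * (u₁ * v₂) = s * ((b * S - 2 * a * m : ℤ) : ℂ) := by
      rw [hAn, hBn]; push_cast
      linear_combination (-(a:ℂ)) * hd + b * s * hS
    have hint : (b * S - 2 * a * m : ℤ) ≠ 0 := by
      intro h0; rw [h0] at eL; apply hne; rw [eL]; simp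
    have low : ‖s‖ ≤ ‖A n * (v₁ * u₂) - B n * (u₁ * v₂)‖ := by
      rw [eL, norm_mul, Complex.norm_intCast]
      have : (1:ℝ) ≤ |((b * S - 2 * a * m : ℤ) : ℝ)| := by exact_mod_cast Int.one_le_abs hint
      nlinarith
    have up := bound n
    have f1 : 108 * (r₂ / r ^ 2 * (T / r ^ 3) ^ n) < 1 := by
      have : 108 * (r₂ / r ^ 2 * (T / r ^ 3) ^ n) = (r₂ * (108 * T ^ n)) / r ^ (3 * n + 2) := by
        rw [div_pow, ← pow_mul, pow_add]; field_simp
      rw [this, div_lt_one (by positivity)]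
      refine lt_of_le_of_lt ?_ c1
      rw [pow_succ']
      gcongr
      linarith
    have f2 : 36 * (r * (243 * r ^ 3) ^ n / r₂ ^ 2) < 1 := by
      have : 36 * (r * (243 * r ^ 3) ^ n / r₂ ^ 2) = (r ^ (3 * n + 1) * (36 * 243 ^ n)) / r₂ ^ 2 := by
        rw [mul_pow, ← pow_mul, pow_succ]; ring
      rw [this, div_lt_one (by positivity)]
      refine lt_of_le_of_lt ?_ c2
      rw [pow_succ' T]
      gcongr
      · linarith
      · linarith
    have g1 := mul_lt_mul_of_pos_left f1 hs
    have g2 := mul_lt_mul_of_pos_left f2 hs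
    linarith
  obtain ⟨N, hN1, hN2⟩ := exists_nat_pow_near (by linarith : (1:ℝ) ≤ r₂) (by linarith : (1:ℝ) < r)
  have hr1' : (1:ℝ) < r := by linarith
  have hN7 : 7 ≤ N := by
    have : r ^ 7 < r ^ (N + 1) := lt_of_le_of_lt hrr hN2
    have := (pow_lt_pow_iff_right₀ hr1').1 this
    omega
  obtain ⟨n, hn3, hn1, hn2⟩ : ∃ n, 3 ≤ n ∧ 2 * n + 1 ≤ N ∧ N ≤ 2 * n + 2 := ⟨(N - 1) / 2, by omega, by omega, by omega⟩
  have hT0 : (1:ℝ) ≤ T := by linarith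
  have hT0' : (1:ℝ) < T := by linarith
  have q1 : r₂ * T ^ (n + 1) < r ^ (3 * n + 2) := by
    have : T ^ (n + 1) ≤ r ^ (n - 1) := by
      calc T ^ (n + 1) ≤ T ^ (8 * (n - 1)) := pow_le_pow_right₀ hT0 (by omega)
        _ = (T ^ 8) ^ (n - 1) := by rw [pow_mul]
        _ ≤ _ := by gcongr
    calc r₂ * T ^ (n + 1) < r ^ (N + 1) * T ^ (n + 1) := by gcongr
      _ ≤ r ^ (2 * n + 3) * r ^ (n - 1) := mul_le_mul (pow_le_pow_right₀ hr1'.le (by omega)) this (by positivity) (by positivity)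
      _ = _ := by rw [← pow_add]; congr 1; omega
  have q2 : r ^ (3 * n + 4) * T ^ (n + 2) < r₂ ^ 2 := by
    have : T ^ (n + 2) < r ^ (n - 2) := by
      calc T ^ (n + 2) < T ^ (8 * (n - 2)) := pow_lt_pow_right₀ hT0' (by omega)
        _ = (T ^ 8) ^ (n - 2) := by rw [pow_mul]
        _ ≤ _ := by gcongr
    calc r ^ (3 * n + 4) * T ^ (n + 2) < r ^ (3 * n + 4) * r ^ (n - 2) := by gcongr
      _ = r ^ (2 * (2 * n + 1)) := by rw [← pow_add]; congr 1; omega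
      _ ≤ r ^ (2 * N) := pow_le_pow_right₀ hr1'.le (by omega)
      _ = (r ^ N) ^ 2 := by rw [mul_comm, pow_mul]
      _ ≤ _ := by gcongr
  have z1 := zero n q1 (by
    refine lt_of_le_of_lt ?_ q2
    exact mul_le_mul (pow_le_pow_right₀ hr1'.le (by omega)) (pow_le_pow_right₀ hT0 (by omega)) (by positivity) (by positivity))
  have hTr : T ≤ r := by
    calc T = T ^ 1 := by simp
      _ ≤ T ^ 8 := pow_le_pow_right₀ hT0 (by norm_num)
      _ ≤ r := hrT
  have z2 := zero (n + 1) (by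
    calc r₂ * T ^ (n + 1 + 1) = (r₂ * T ^ (n + 1)) * T := by ring
      _ < r ^ (3 * n + 2) * r := mul_lt_mul q1 hTr (by linarith) (by positivity)
      _ = r ^ (3 * n + 3) := by ring
      _ ≤ r ^ (3 * (n + 1) + 2) := pow_le_pow_right₀ hr1'.le (by omega)) (by
    have : 3 * (n + 1) + 1 = 3 * n + 4 := by ring
    rw [this]; exact q2)
  have hdet := Ah_det n (v₁ ^ 3) (-u₁ ^ 3) (pow_ne_zero _ vne) (by
    intro h
    have : (2:ℂ) * s = 0 := by rw [← h₁.h3]; linear_combination h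
    have : s = 0 := by simpa using this
    rw [this] at hs; simp at hs)
  apply hdet
  have hβ : u₁ * v₂ ≠ 0 := mul_ne_zero une v2ne
  have : (A n * B (n + 1) - A (n + 1) * B n) * (u₁ * v₂) = 0 := by
    linear_combination (-A n) * z2 + A (n + 1) * z1
  rcases mul_eq_zero.1 this with h | h
  · exact h
  · exact absurd h hβ

end Mord

namespace Mord
open Finset

lemma chain (k : ℤ) (hk : 10 ^ 12 ≤ |k|) (S : Finset ℤ) (hx : ∀ x ∈ S, |k| ≤ 8 * x)
    (hg : ∀ a ∈ S, ∀ b ∈ S, a < b → a ^ 2 ≤ 100 * b)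
    (hf : ∀ a ∈ S, ∀ b ∈ S, a < b → (31104 * |k|) ^ 16 ≤ a → a ^ 7 ≤ b → False) : S.card ≤ 8 := by
  by_contra hc
  push Not at hc
  let f : ℕ → ℤ := fun i => if h : i < S.card then S.orderEmbOfFin rfl ⟨i, h⟩ else 0
  have hfS : ∀ i, i ≤ 8 → f i ∈ S := by
    intro i hi
    have h : i < S.card := by omega
    simp only [f, dif_pos h]
    exact S.orderEmbOfFin_mem rfl _
  have hfl : ∀ i j, i < j → j ≤ 8 → f i < f j := by
    intro i j hij hj
    have h : i < S.card := by omega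
    have h' : j < S.card := by omega
    simp only [f, dif_pos h, dif_pos h']
    exact (S.orderEmbOfFin rfl).strictMono hij
  set w : ℕ → ℝ := fun i => (f i : ℝ) / 100 with hw
  have hwf : ∀ i, (f i : ℝ) = 100 * w i := by intro i; simp only [hw]; ring
  have hkR : (10:ℝ) ^ 12 ≤ |(k:ℝ)| := by exact_mod_cast hk
  have hst : ∀ i, i < 8 → w i ^ 2 ≤ w (i + 1) := by
    intro i hi
    have h := hg _ (hfS i (by omega)) _ (hfS (i + 1) (by omega)) (hfl i (i + 1) (by omega) (by omega))
    have h' : (f i : ℝ) ^ 2 ≤ 100 * f (i + 1) := by exact_mod_cast h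
    rw [hwf, hwf] at h'
    nlinarith
  have h0 : |(k:ℝ)| / 800 ≤ w 0 := by
    have : |(k:ℝ)| ≤ 8 * f 0 := by exact_mod_cast hx _ (hfS 0 (by omega))
    rw [hwf] at this; linarith
  have hw0 : 0 ≤ w 0 := by linarith
  have hpow : ∀ i j, i ≤ j → j ≤ 8 → 0 ≤ w i → w i ^ (2 ^ (j - i)) ≤ w j := by
    intro i j hij
    induction j, hij using Nat.le_induction with
    | base => intro _ _; simp
    | succ j hij ih =>
      intro hj h0
      have := ih (by omega) h0
      refine le_trans ?_ (hst j (by omega))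
      rw [show j + 1 - i = (j - i) + 1 by omega, pow_succ 2, pow_mul]
      gcongr
  have h1 : 31104 * |(k:ℝ)| ≤ w 0 ^ 2 := by
    calc 31104 * |(k:ℝ)| ≤ (|(k:ℝ)| / 800) ^ 2 := by nlinarith
      _ ≤ _ := by gcongr
  have h5 : (31104 * |(k:ℝ)|) ^ 16 ≤ w 5 := by
    calc (31104 * |(k:ℝ)|) ^ 16 ≤ (w 0 ^ 2) ^ 16 := by gcongr
      _ = w 0 ^ (2 ^ (5 - 0)) := by rw [← pow_mul]; norm_num
      _ ≤ _ := hpow 0 5 (by omega) (by omega) hw0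
  have hbig : (10:ℝ) ^ 16 ≤ (31104 * |(k:ℝ)|) ^ 16 := by gcongr; linarith
  have hw5 : (10:ℝ) ^ 16 ≤ w 5 := hbig.trans h5
  have h8 := hpow 5 8 (by omega) (by omega) (by linarith)
  norm_num at h8
  refine hf _ (hfS 5 (by omega)) _ (hfS 8 (by omega)) (hfl 5 8 (by omega) (by omega)) ?_ ?_
  · have : (31104 * |(k:ℝ)|) ^ 16 ≤ f 5 := by rw [hwf]; linarith
    exact_mod_cast this
  · have : (f 5 : ℝ) ^ 7 ≤ f 8 := by
      rw [hwf, hwf]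
      calc (100 * w 5) ^ 7 = 100 * (10 ^ 12 * w 5 ^ 7) := by ring
        _ ≤ 100 * (w 5 * w 5 ^ 7) := by gcongr; linarith
        _ = 100 * w 5 ^ 8 := by ring
        _ ≤ _ := by gcongr
    exact_mod_cast this

end Mord

namespace Mord
open Finset
open scoped Modular MatrixGroups

lemma red_real (A B C D : ℝ) (hA : 0 < A) (hD : 0 < D) (hABC : A * C - B ^ 2 = D) :
    ∃ a b c d : ℤ, a * d - b * c = 1 ∧
      A * d ^ 2 + 2 * B * d * c + C * c ^ 2 ≤ A * b ^ 2 + 2 * B * b * a + C * a ^ 2 ∧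
      (A * d ^ 2 + 2 * B * d * c + C * c ^ 2) * (A * b ^ 2 + 2 * B * b * a + C * a ^ 2) ≤ 4 / 3 * D := by
  let z : UpperHalfPlane := ⟨⟨B / A, √D / A⟩, by simpa using by positivity⟩
  obtain ⟨g, hg⟩ := ModularGroup.exists_smul_mem_fd z
  have hdet := g.det_coe
  rw [Matrix.det_fin_two] at hdet
  refine ⟨g 0 0, g 0 1, g 1 0, g 1 1, hdet, ?_⟩
  have hz : ((g • z : UpperHalfPlane) : ℂ) = (g 0 0 * z + g 0 1) / (g 1 0 * z + g 1 1) := by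
    simpa using UpperHalfPlane.coe_specialLinearGroup_apply g z
  obtain ⟨h1, h2⟩ := hg
  rw [← UpperHalfPlane.coe_re] at h2
  rw [hz] at h1 h2
  generalize g 0 0 = a at *
  generalize g 0 1 = b at *
  generalize g 1 0 = c at *
  generalize g 1 1 = d at *
  have hzc : (z : ℂ) = ⟨B / A, √D / A⟩ := rfl
  rw [hzc] at h1 h2
  have hdR : (a:ℝ) * d - b * c = 1 := by exact_mod_cast hdet
  have hsD : √D ^ 2 = D := Real.sq_sqrt hD.le
  set Q1 := A * (d:ℝ) ^ 2 + 2 * B * d * c + C * c ^ 2 with hQ1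
  set Q2 := A * (b:ℝ) ^ 2 + 2 * B * b * a + C * a ^ 2 with hQ2
  set R := A * (d:ℝ) * b + B * (d * a + b * c) + C * c * a with hR
  have hQQ : Q1 * Q2 = R ^ 2 + D := by
    have : Q1 * Q2 - R ^ 2 = (A * C - B ^ 2) * ((a:ℝ) * d - b * c) ^ 2 := by rw [hQ1, hQ2, hR]; ring
    rw [hABC, hdR] at this; linarith
  have hC : C = (D + B ^ 2) / A := by field_simp; linarith
  have n1 : Complex.normSq ((c:ℂ) * ⟨B / A, √D / A⟩ + d) = Q1 / A := by
    rw [Complex.normSq_apply]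
    simp
    rw [hQ1, hC]; field_simp; linear_combination (c:ℝ) ^ 2 * hsD
  have n2 : Complex.normSq ((a:ℂ) * ⟨B / A, √D / A⟩ + b) = Q2 / A := by
    rw [Complex.normSq_apply]
    simp
    rw [hQ2, hC]; field_simp; linear_combination (a:ℝ) ^ 2 * hsD
  have hQ1n : 0 ≤ Q1 := by
    have := Complex.normSq_nonneg ((c:ℂ) * ⟨B / A, √D / A⟩ + d)
    rw [n1] at this
    have h := mul_nonneg this hA.le
    rwa [div_mul_cancel₀ _ hA.ne'] at h
  have hQ1p : 0 < Q1 := by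
    rcases hQ1n.lt_or_eq with h | h
    · exact h
    · rw [← h] at hQQ; nlinarith [sq_nonneg R]
  rw [Complex.normSq_div, n1, n2, div_div_div_cancel_right₀ hA.ne', one_le_div hQ1p] at h1
  refine ⟨h1, ?_⟩
  have hre : (((a:ℂ) * ⟨B / A, √D / A⟩ + b) / ((c:ℂ) * ⟨B / A, √D / A⟩ + d)).re = R / Q1 := by
    rw [Complex.div_re, n1]
    simp
    rw [hR, hC]; field_simp; linear_combination (a:ℝ) * c * hsD
  rw [hre, abs_div, abs_of_pos hQ1p, div_le_iff₀ hQ1p] at h2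
  have : R ^ 2 ≤ (1 / 2 * Q1) ^ 2 := by rw [← sq_abs R]; gcongr
  nlinarith

lemma red_cplx (α β γ δ : ℂ) (hr : (α * star β + γ * star δ).im = 0) (hdet : α * δ - β * γ ≠ 0) :
    ∃ a b c d : ℤ, a * d - b * c = 1 ∧
      ‖α * d + β * c‖ ^ 2 + ‖γ * d + δ * c‖ ^ 2 ≤ ‖α * b + β * a‖ ^ 2 + ‖γ * b + δ * a‖ ^ 2 ∧
      (‖α * d + β * c‖ ^ 2 + ‖γ * d + δ * c‖ ^ 2) * (‖α * b + β * a‖ ^ 2 + ‖γ * b + δ * a‖ ^ 2) ≤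
        4 / 3 * ‖α * δ - β * γ‖ ^ 2 := by
  set A := ‖α‖ ^ 2 + ‖γ‖ ^ 2 with hA
  set C := ‖β‖ ^ 2 + ‖δ‖ ^ 2 with hC
  set B := (α * star β + γ * star δ).re with hB
  have hQ : ∀ X Y : ℤ, ‖α * X + β * Y‖ ^ 2 + ‖γ * X + δ * Y‖ ^ 2 = A * X ^ 2 + 2 * B * X * Y + C * Y ^ 2 := by
    intro X Y
    rw [hA, hC, hB]
    simp only [Complex.sq_norm, Complex.normSq_apply]
    simp
    ring
  have hD : A * C - B ^ 2 = ‖α * δ - β * γ‖ ^ 2 := by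
    have : A * C - B ^ 2 = ‖α * δ - β * γ‖ ^ 2 + (α * star β + γ * star δ).im ^ 2 := by
      rw [hA, hC, hB]
      simp only [Complex.sq_norm, Complex.normSq_apply]
      simp
      ring
    rw [this, hr]; ring
  have hA0 : 0 < A := by
    have h0 : 0 ≤ A := by positivity
    rcases h0.lt_or_eq with h | h
    · exact h
    · exfalso
      have h1 : ‖α‖ ^ 2 = 0 := by nlinarith [sq_nonneg ‖α‖, sq_nonneg ‖γ‖]
      have h2 : ‖γ‖ ^ 2 = 0 := by nlinarith [sq_nonneg ‖α‖, sq_nonneg ‖γ‖]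
      have h1' : α = 0 := by simpa using h1
      have h2' : γ = 0 := by simpa using h2
      apply hdet; rw [h1', h2']; simp
  obtain ⟨a, b, c, d, h1, h2, h3⟩ := red_real A B C _ hA0 (by positivity) hD
  refine ⟨a, b, c, d, h1, ?_, ?_⟩
  · rw [hQ, hQ]; exact h2
  · rw [hQ, hQ]; exact h3

/-- cube roots -/
lemma roots (k : ℤ) (hk : k ≠ 0) : ∃ s : ℂ, s ^ 2 = k ∧ ∀ x y : ℤ, x ≠ 0 → y ^ 2 = x ^ 3 + k →
    ∃ ξ η : ℂ, η ^ 3 = s + y ∧ ξ ^ 3 = s - y ∧ ξ * η = -x ∧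
      (ξ * star (η ^ 2) + η * star (-ξ ^ 2)).im = 0 := by
  rcases lt_or_gt_of_ne hk with h | h
  · refine ⟨Complex.I * √(-(k:ℝ)), ?_, ?_⟩
    · rw [mul_pow, Complex.I_sq, ← Complex.ofReal_pow, Real.sq_sqrt]
      · simp
      · have : (k:ℝ) < 0 := by exact_mod_cast h
        linarith
    · intro x y hx hy
      have hs : √(-(k:ℝ)) ^ 2 = -k := Real.sq_sqrt (by have : (k:ℝ) < 0 := by exact_mod_cast h
                                                       linarith)
      generalize √(-(k:ℝ)) = r at *
      obtain ⟨η, hη⟩ := IsAlgClosed.exists_pow_nat_eq (Complex.I * r + y) (by norm_num : 0 < 3)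
      have hc : (star η) ^ 3 = -Complex.I * r + y := by
        rw [← star_pow, hη]; simp
      have hn : Complex.normSq η = x := by
        have h3 : (Complex.normSq η) ^ 3 = (x:ℝ) ^ 3 := by
          rw [← map_pow, hη, Complex.normSq_apply]
          simp
          have : (y:ℝ) ^ 2 = x ^ 3 + k := by exact_mod_cast hy
          nlinarith
        exact (Odd.strictMono_pow (by decide : Odd 3)).injective h3
      refine ⟨-star η, η, hη, ?_, ?_, ?_⟩
      · rw [neg_pow, hc]; ring
      · rw [neg_mul, mul_comm]
        have := Complex.mul_conj η
        rw [hn] at this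
        simpa using this
      · have : -star η * star (η ^ 2) + η * star (-(-star η) ^ 2) = -(star η ^ 3 + η ^ 3) := by
          simp only [star_neg, star_pow, star_star, neg_sq]; ring
        rw [this, hc, hη]; simp
  · refine ⟨(√(k:ℝ) : ℝ), ?_, ?_⟩
    · rw [← Complex.ofReal_pow, Real.sq_sqrt]
      · simp
      · exact_mod_cast h.le
    · intro x y hx hy
      have hs : √(k:ℝ) ^ 2 = k := Real.sq_sqrt (by exact_mod_cast h.le)
      generalize √(k:ℝ) = r at *
      have hcube : ∀ t : ℝ, ∃ z : ℝ, z ^ 3 = t := by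
        intro t
        rcases le_total 0 t with h | h
        · exact ⟨_, Real.rpow_inv_natCast_pow h (by norm_num : (3:ℕ) ≠ 0)⟩
        · obtain ⟨z, hz⟩ : ∃ z : ℝ, z ^ 3 = -t :=
            ⟨_, Real.rpow_inv_natCast_pow (by linarith : 0 ≤ -t) (by norm_num : (3:ℕ) ≠ 0)⟩
          exact ⟨-z, by rw [Odd.neg_pow (by decide), hz]; ring⟩
      obtain ⟨η, hη⟩ := hcube (r + y)
      have hyR : (y:ℝ) ^ 2 = x ^ 3 + k := by exact_mod_cast hy
      have hxR : (x:ℝ) ≠ 0 := by exact_mod_cast hx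
      have hprod : (r + y) * (r - y) = -(x:ℝ) ^ 3 := by nlinarith
      have hη0 : η ≠ 0 := by
        rintro rfl
        rw [← hη] at hprod
        simp at hprod
        exact hx hprod
      refine ⟨(-x / η : ℝ), η, by exact_mod_cast hη, ?_, ?_, ?_⟩
      · have : (-x / η) ^ 3 = r - y := by
          rw [div_pow, hη, div_eq_iff]
          · linarith
          · rw [← hη]; positivity
        exact_mod_cast this
      · have : (-x / η) * η = -x := by field_simp
        exact_mod_cast this
      · generalize (-(x:ℝ) / η) = ζ
        simp [← Complex.ofReal_pow]

end Mord

namespace Mord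
open Finset

structure Pt (k : ℤ) (s : ℂ) (x : ℤ) (a b c d p q : ℤ) (u₁ u₂ v₁ v₂ : ℂ) : Prop where
  ha : 2 * s * a = u₁ ^ 3 + v₁ ^ 3
  hb : 2 * s * b = u₁ ^ 2 * u₂ + v₁ ^ 2 * v₂
  hc : 2 * s * c = u₁ * u₂ ^ 2 + v₁ * v₂ ^ 2
  hd : 2 * s * d = u₂ ^ 3 + v₂ ^ 3
  hdet : u₁ * v₂ - u₂ * v₁ = -2 * s
  hf : a * p ^ 3 + 3 * b * p ^ 2 * q + 3 * c * p * q ^ 2 + d * q ^ 3 = 1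
  hx : (u₁ * p + u₂ * q) * (v₁ * p + v₂ * q) = -x

lemma Pt.inv {k : ℤ} {s : ℂ} {x : ℤ} {a b c d p q : ℤ} {u₁ u₂ v₁ v₂ : ℂ}
    (h : Pt k s x a b c d p q u₁ u₂ v₁ v₂) (hs : s ≠ 0) :
    u₁ * v₁ = (a * c - b ^ 2 : ℤ) ∧ u₁ * v₂ + u₂ * v₁ = (a * d - b * c : ℤ) ∧ u₂ * v₂ = (b * d - c ^ 2 : ℤ) := by
  have h4 : (4 * s ^ 2) ≠ 0 := by simpa using hs
  have e : (u₁ * v₂ - u₂ * v₁) ^ 2 = 4 * s ^ 2 := by rw [h.hdet]; ring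
  refine ⟨?_, ?_, ?_⟩ <;> apply mul_right_cancel₀ h4 <;> push_cast
  · calc u₁ * v₁ * (4 * s ^ 2) = (u₁ ^ 3 + v₁ ^ 3) * (u₁ * u₂ ^ 2 + v₁ * v₂ ^ 2) - (u₁ ^ 2 * u₂ + v₁ ^ 2 * v₂) ^ 2 := by
          rw [← e]; ring
      _ = _ := by rw [← h.ha, ← h.hb, ← h.hc]; ring
  · calc (u₁ * v₂ + u₂ * v₁) * (4 * s ^ 2) = (u₁ ^ 3 + v₁ ^ 3) * (u₂ ^ 3 + v₂ ^ 3) - (u₁ ^ 2 * u₂ + v₁ ^ 2 * v₂) * (u₁ * u₂ ^ 2 + v₁ * v₂ ^ 2) := by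
          rw [← e]; ring
      _ = _ := by rw [← h.ha, ← h.hb, ← h.hc, ← h.hd]; ring
  · calc u₂ * v₂ * (4 * s ^ 2) = (u₁ ^ 2 * u₂ + v₁ ^ 2 * v₂) * (u₂ ^ 3 + v₂ ^ 3) - (u₁ * u₂ ^ 2 + v₁ * v₂ ^ 2) ^ 2 := by
          rw [← e]; ring
      _ = _ := by rw [← h.hb, ← h.hc, ← h.hd]; ring

lemma Pt.disc {k : ℤ} {s : ℂ} {x : ℤ} {a b c d p q : ℤ} {u₁ u₂ v₁ v₂ : ℂ}
    (h : Pt k s x a b c d p q u₁ u₂ v₁ v₂) (hs : s ≠ 0) (hsk : s ^ 2 = k) :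
    (a * d - b * c) ^ 2 - 4 * (a * c - b ^ 2) * (b * d - c ^ 2) = 4 * k := by
  obtain ⟨h1, h2, h3⟩ := h.inv hs
  have e : (u₁ * v₂ - u₂ * v₁) ^ 2 = 4 * s ^ 2 := by rw [h.hdet]; ring
  have : (((a * d - b * c) ^ 2 - 4 * (a * c - b ^ 2) * (b * d - c ^ 2) : ℤ) : ℂ) = (4 * k : ℤ) := by
    have : (((a * d - b * c) ^ 2 - 4 * (a * c - b ^ 2) * (b * d - c ^ 2) : ℤ) : ℂ) =
      ((a * d - b * c : ℤ) : ℂ) ^ 2 - 4 * ((a * c - b ^ 2 : ℤ) : ℂ) * ((b * d - c ^ 2 : ℤ) : ℂ) := by push_cast; ring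
    rw [this, ← h1, ← h2, ← h3]; push_cast; rw [← hsk, ← e]; ring
  exact_mod_cast this

lemma cs (α β γ δ : ℝ) (hα : 0 ≤ α) (hβ : 0 ≤ β) :
    (α ^ 2 * γ + β ^ 2 * δ) ^ 2 ≤ (α ^ 2 + β ^ 2) ^ 2 * (γ ^ 2 + δ ^ 2) := by
  have : (α ^ 2 * γ + β ^ 2 * δ) ^ 2 ≤ (α ^ 4 + β ^ 4) * (γ ^ 2 + δ ^ 2) := by
    nlinarith [sq_nonneg (α ^ 2 * δ - β ^ 2 * γ)]
  refine this.trans ?_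
  gcongr
  nlinarith [mul_nonneg (sq_nonneg α) (sq_nonneg β)]

lemma csn (s : ℂ) (K : ℝ) (hK : ‖s‖ ^ 2 = K) (n : ℤ) (u v w z : ℂ) (h : 2 * s * n = u ^ 2 * w + v ^ 2 * z) :
    4 * K * (n:ℝ) ^ 2 ≤ (‖u‖ ^ 2 + ‖v‖ ^ 2) ^ 2 * (‖w‖ ^ 2 + ‖z‖ ^ 2) := by
  refine le_trans ?_ (cs ‖u‖ ‖v‖ ‖w‖ ‖z‖ (norm_nonneg _) (norm_nonneg _))
  have : ‖2 * s * n‖ ≤ ‖u‖ ^ 2 * ‖w‖ + ‖v‖ ^ 2 * ‖z‖ := by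
    rw [h, ← norm_pow, ← norm_pow, ← norm_mul, ← norm_mul]; exact norm_add_le _ _
  calc 4 * K * (n:ℝ) ^ 2 = ‖2 * s * n‖ ^ 2 := by
        rw [norm_mul, norm_mul, Complex.norm_intCast, mul_pow, mul_pow, sq_abs, hK]; norm_num
    _ ≤ _ := by gcongr

lemma bds (K Q₁ Q₂ a b c : ℝ) (hK : 0 < K) (h1 : 0 ≤ Q₁) (h12 : Q₁ ≤ Q₂) (hQ : Q₁ * Q₂ ≤ 16 / 3 * K)
    (ha : 4 * K * a ^ 2 ≤ Q₁ ^ 2 * Q₁) (hb : 4 * K * b ^ 2 ≤ Q₁ ^ 2 * Q₂) (hc : 4 * K * c ^ 2 ≤ Q₂ ^ 2 * Q₁) :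
    a ^ 4 ≤ 10 * K ∧ b ^ 4 ≤ 10 * K ∧ (1 ≤ a ^ 2 → (c ^ 3) ^ 2 ≤ (10 * K) ^ 2) ∧ (1 ≤ b ^ 2 → c ^ 2 ≤ 10 * K) := by
  have h2 : 0 ≤ Q₂ := h1.trans h12
  have hQ3 : (Q₁ * Q₂) ^ 3 ≤ (16 / 3 * K) ^ 3 := by gcongr
  have hQ6 : (Q₁ * Q₂) ^ 6 ≤ (16 / 3 * K) ^ 6 := by gcongr
  have hK2 : 0 < 16 * K ^ 2 := by positivity
  refine ⟨?_, ?_, ?_, ?_⟩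
  · have : 16 * K ^ 2 * a ^ 4 ≤ 16 * K ^ 2 * (10 * K) := by
      calc 16 * K ^ 2 * a ^ 4 = (4 * K * a ^ 2) ^ 2 := by ring
        _ ≤ (Q₁ ^ 2 * Q₁) ^ 2 := by gcongr
        _ = Q₁ ^ 3 * Q₁ ^ 3 := by ring
        _ ≤ Q₁ ^ 3 * Q₂ ^ 3 := by gcongr
        _ = (Q₁ * Q₂) ^ 3 := by ring
        _ ≤ _ := hQ3
        _ ≤ _ := by have : 0 < K ^ 3 := by positivity
                    nlinarith
    exact le_of_mul_le_mul_left this hK2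
  · have : 16 * K ^ 2 * b ^ 4 ≤ 16 * K ^ 2 * (10 * K) := by
      calc 16 * K ^ 2 * b ^ 4 = (4 * K * b ^ 2) ^ 2 := by ring
        _ ≤ (Q₁ ^ 2 * Q₂) ^ 2 := by gcongr
        _ = Q₁ ^ 3 * Q₂ ^ 2 * Q₁ := by ring
        _ ≤ Q₁ ^ 3 * Q₂ ^ 2 * Q₂ := by gcongr
        _ = (Q₁ * Q₂) ^ 3 := by ring
        _ ≤ _ := hQ3
        _ ≤ _ := by have : 0 < K ^ 3 := by positivity
                    nlinarith
    exact le_of_mul_le_mul_left this hK2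
  · intro h
    have h4 : 4 * K ≤ Q₁ ^ 2 * Q₁ := by nlinarith
    have : 256 * K ^ 4 * (c ^ 3) ^ 2 ≤ 256 * K ^ 4 * (10 * K) ^ 2 := by
      calc 256 * K ^ 4 * (c ^ 3) ^ 2 = (4 * K * c ^ 2) ^ 3 * (4 * K) := by ring
        _ ≤ (Q₂ ^ 2 * Q₁) ^ 3 * (Q₁ ^ 2 * Q₁) := by gcongr
        _ = (Q₁ * Q₂) ^ 6 := by ring
        _ ≤ _ := hQ6
        _ ≤ _ := by have : 0 < K ^ 6 := by positivity
                    nlinarith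
    exact le_of_mul_le_mul_left this (by positivity)
  · intro h
    have h4 : 4 * K ≤ Q₁ ^ 2 * Q₂ := by nlinarith
    have : 16 * K ^ 2 * c ^ 2 ≤ 16 * K ^ 2 * (10 * K) := by
      calc 16 * K ^ 2 * c ^ 2 = (4 * K * c ^ 2) * (4 * K) := by ring
        _ ≤ (Q₂ ^ 2 * Q₁) * (Q₁ ^ 2 * Q₂) := by gcongr
        _ = (Q₁ * Q₂) ^ 3 := by ring
        _ ≤ _ := hQ3
        _ ≤ _ := by have : 0 < K ^ 3 := by positivity
                    nlinarith
    exact le_of_mul_le_mul_left this hK2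

lemma point (k : ℤ) (hk : k ≠ 0) : ∃ s : ℂ, s ^ 2 = k ∧ ∀ x y : ℤ, x ≠ 0 → y ^ 2 = x ^ 3 + k →
    ∃ a b c d p q : ℤ, ∃ u₁ u₂ v₁ v₂ : ℂ, Pt k s x a b c d p q u₁ u₂ v₁ v₂ ∧
      a ^ 4 ≤ 10 * |k| ∧ b ^ 4 ≤ 10 * |k| ∧ (a ≠ 0 → |c| ^ 3 ≤ 10 * |k|) ∧ (a = 0 → b ≠ 0 ∧ c ^ 2 ≤ 10 * |k|) := by
  obtain ⟨s, hs, H⟩ := roots k hk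
  refine ⟨s, hs, ?_⟩
  intro x y hx hy
  obtain ⟨ξ, η, hη, hξ, hξη, him⟩ := H x y hx hy
  have hs0 : s ≠ 0 := by
    rintro rfl
    apply hk
    have : (k:ℂ) = 0 := by rw [← hs]; simp
    exact_mod_cast this
  have hdet0 : ξ * (-ξ ^ 2) - η ^ 2 * η = -2 * s := by linear_combination (-1) * hη - hξ
  obtain ⟨a, b, c, d, hdet, hle, hprod⟩ := red_cplx ξ (η ^ 2) η (-ξ ^ 2) him (by rw [hdet0]; simpa using hs0)
  have hdetC : (a:ℂ) * d - b * c = 1 := by exact_mod_cast hdet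
  have hsn : ‖s‖ ^ 2 = |(k:ℝ)| := by rw [← norm_pow, hs, Complex.norm_intCast]
  have hKp : 0 < |(k:ℝ)| := by rw [abs_pos]; exact_mod_cast hk
  have hP : Pt k s x (d ^ 3 - 3 * x * d * c ^ 2 + 2 * y * c ^ 3)
      (d ^ 2 * b - x * (2 * d * c * a + c ^ 2 * b) + 2 * y * c ^ 2 * a)
      (d * b ^ 2 - x * (2 * b * c * a + a ^ 2 * d) + 2 * y * c * a ^ 2)
      (b ^ 3 - 3 * x * b * a ^ 2 + 2 * y * a ^ 3) a (-c)
      (ξ * d + η ^ 2 * c) (ξ * b + η ^ 2 * a) (η * d + -ξ ^ 2 * c) (η * b + -ξ ^ 2 * a) := by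
    have hx' : (x:ℂ) = -(ξ * η) := by rw [hξη]; ring
    have hy' : (y:ℂ) = (η ^ 3 - ξ ^ 3) / 2 := by rw [hη, hξ]; ring
    have hs' : s = (η ^ 3 + ξ ^ 3) / 2 := by rw [hη, hξ]; ring
    constructor
    · push_cast; rw [hx', hy', hs']; ring
    · push_cast; rw [hx', hy', hs']; ring
    · push_cast; rw [hx', hy', hs']; ring
    · push_cast; rw [hx', hy', hs']; ring
    · rw [← hdet0]; linear_combination (ξ * (-ξ ^ 2) - η ^ 2 * η) * hdetC
    · have e : (1:ℤ) = (a * d - b * c) ^ 3 := by rw [hdet]; ring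
      rw [e]; ring
    · rw [← hξη]; push_cast
      have e1 : (ξ * d + η ^ 2 * c) * a + (ξ * b + η ^ 2 * a) * (-c) = ξ := by linear_combination ξ * hdetC
      have e2 : (η * d + -ξ ^ 2 * c) * a + (η * b + -ξ ^ 2 * a) * (-c) = η := by linear_combination η * hdetC
      rw [e1, e2]
  refine ⟨_, _, _, _, _, _, _, _, _, _, hP, ?_⟩
  have hdisc := hP.disc hs0 hs
  have b1 := csn s _ hsn _ (ξ * d + η ^ 2 * c) (η * d + -ξ ^ 2 * c) (ξ * d + η ^ 2 * c) (η * d + -ξ ^ 2 * c)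
    (hP.ha.trans (by ring))
  have b2 := csn s _ hsn _ _ _ _ _ hP.hb
  have b3 := csn s _ hsn _ (ξ * b + η ^ 2 * a) (η * b + -ξ ^ 2 * a) (ξ * d + η ^ 2 * c) (η * d + -ξ ^ 2 * c)
    (hP.hc.trans (by ring))
  have hprod' : (‖ξ * d + η ^ 2 * c‖ ^ 2 + ‖η * d + -ξ ^ 2 * c‖ ^ 2) *
      (‖ξ * b + η ^ 2 * a‖ ^ 2 + ‖η * b + -ξ ^ 2 * a‖ ^ 2) ≤ 16 / 3 * |(k:ℝ)| := by
    refine hprod.trans ?_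
    rw [hdet0, norm_mul, mul_pow, hsn]; norm_num; linarith
  obtain ⟨r1, r2, r3, r4⟩ := bds _ _ _ _ _ _ hKp (by positivity) hle hprod' b1 b2 b3
  clear b1 b2 b3 hprod' hprod hle hP
  generalize d ^ 3 - 3 * x * d * c ^ 2 + 2 * y * c ^ 3 = a' at *
  generalize d ^ 2 * b - x * (2 * d * c * a + c ^ 2 * b) + 2 * y * c ^ 2 * a = b' at *
  generalize d * b ^ 2 - x * (2 * b * c * a + a ^ 2 * d) + 2 * y * c * a ^ 2 = c' at *
  generalize b ^ 3 - 3 * x * b * a ^ 2 + 2 * y * a ^ 3 = d' at *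
  refine ⟨by exact_mod_cast r1, by exact_mod_cast r2, ?_, ?_⟩
  · intro h0
    have h1 : 1 ≤ a' ^ 2 := by have := sq_pos_of_ne_zero h0; omega
    have := r3 (by exact_mod_cast h1)
    have h2 : (c' ^ 3) ^ 2 ≤ (10 * |k|) ^ 2 := by exact_mod_cast this
    rw [← abs_pow]
    exact abs_le_of_sq_le_sq h2 (by positivity)
  · intro h0
    have hb0 : b' ≠ 0 := by
      rintro rfl
      rw [h0] at hdisc
      apply hk
      linarith
    refine ⟨hb0, ?_⟩
    have h1 : 1 ≤ b' ^ 2 := by have := sq_pos_of_ne_zero hb0; omega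
    have := r4 (by exact_mod_cast h1)
    exact_mod_cast this

end Mord

namespace Mord
open Finset

lemma card_two {α : Type*} [DecidableEq α] (G : Finset α) (g : α → ℤ) (C : ℤ) (hg : ∀ P ∈ G, g P ^ 2 = C)
    (hinj : ∀ P ∈ G, ∀ Q ∈ G, g P = g Q → P = Q) : G.card ≤ 2 := by
  have : G.card ≤ (Finset.univ : Finset Bool).card := by
    apply Finset.card_le_card_of_injOn (fun P => decide (0 ≤ g P)) (fun P _ => Finset.mem_coe.2 (Finset.mem_univ _))
    intro P hP Q hQ h
    have h : decide (0 ≤ g P) = decide (0 ≤ g Q) := h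
    apply hinj P hP Q hQ
    have h1 : g P ^ 2 = g Q ^ 2 := (hg P hP).trans (hg Q hQ).symm
    rw [decide_eq_decide] at h
    rcases sq_eq_sq_iff_eq_or_eq_neg.1 h1 with h2 | h2 <;> omega
  simpa using this

lemma two (k : ℤ) (G : Finset (ℤ × ℤ)) (hG : ∀ P ∈ G, P.2 ^ 2 = P.1 ^ 3 + k) :
    G.card ≤ 2 * (G.image Prod.fst).card := by
  apply Finset.card_le_mul_card_image
  intro x hx
  apply card_two _ (fun P => P.2) (x ^ 3 + k)
  · intro P hP
    rw [mem_filter] at hP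
    rw [← hP.2]; exact hG P hP.1
  · intro P hP Q hQ h
    rw [mem_filter] at hP hQ
    exact Prod.ext (hP.2.trans hQ.2.symm) h

lemma par (a b c d p q p' q' : ℤ) (hf : a * p ^ 3 + 3 * b * p ^ 2 * q + 3 * c * p * q ^ 2 + d * q ^ 3 = 1)
    (hf' : a * p' ^ 3 + 3 * b * p' ^ 2 * q' + 3 * c * p' * q' ^ 2 + d * q' ^ 3 = 1) (h : p * q' = p' * q) :
    p = p' ∧ q = q' := by
  have inj : Function.Injective (fun z : ℤ => z ^ 3) := (Odd.strictMono_pow (by decide : Odd 3)).injective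
  constructor
  · apply inj
    show p ^ 3 = p' ^ 3
    calc p ^ 3 = p ^ 3 * (a * p' ^ 3 + 3 * b * p' ^ 2 * q' + 3 * c * p' * q' ^ 2 + d * q' ^ 3) := by rw [hf']; ring
      _ = a * p' ^ 3 * p ^ 3 + 3 * b * p' ^ 2 * p ^ 2 * (p * q') + 3 * c * p' * p * (p * q') ^ 2 + d * (p * q') ^ 3 := by ring
      _ = p' ^ 3 * (a * p ^ 3 + 3 * b * p ^ 2 * q + 3 * c * p * q ^ 2 + d * q ^ 3) := by rw [h]; ring
      _ = _ := by rw [hf]; ring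
  · apply inj
    show q ^ 3 = q' ^ 3
    calc q ^ 3 = q ^ 3 * (a * p' ^ 3 + 3 * b * p' ^ 2 * q' + 3 * c * p' * q' ^ 2 + d * q' ^ 3) := by rw [hf']; ring
      _ = a * (p' * q) ^ 3 + 3 * b * (p' * q) ^ 2 * (q * q') + 3 * c * (p' * q) * (q * q') ^ 2 + d * q' ^ 3 * q ^ 3 := by ring
      _ = q' ^ 3 * (a * p ^ 3 + 3 * b * p ^ 2 * q + 3 * c * p * q ^ 2 + d * q ^ 3) := by rw [← h]; ring
      _ = _ := by rw [hf]; ring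

lemma fiber (k : ℤ) (hk : 10 ^ 12 ≤ |k|) (s : ℂ) (hs : s ^ 2 = k) (a b c d : ℤ) (F : Finset (ℤ × ℤ))
    (hF : ∀ P ∈ F, P.2 ^ 2 = P.1 ^ 3 + k ∧ |k| ≤ 8 * P.1 ∧
      ∃ (p q : ℤ) (u₁ u₂ v₁ v₂ : ℂ), Pt k s P.1 a b c d p q u₁ u₂ v₁ v₂) : F.card ≤ 48 := by
  rcases F.eq_empty_or_nonempty with rfl | ⟨P₀, hP₀⟩
  · simp
  have hs0 : s ≠ 0 := by
    rintro rfl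
    have : (k:ℂ) = 0 := by rw [← hs]; simp
    have : k = 0 := by exact_mod_cast this
    rw [this] at hk; norm_num at hk
  obtain ⟨-, -, p₀, q₀, u₁, u₂, v₁, v₂, h₀⟩ := hF P₀ hP₀
  obtain ⟨i1, i2, i3⟩ := h₀.inv hs0
  have key : ∀ P : ℤ × ℤ, ∃ p q : ℤ, P ∈ F →
      a * p ^ 3 + 3 * b * p ^ 2 * q + 3 * c * p * q ^ 2 + d * q ^ 3 = 1 ∧
      (u₁ * p + u₂ * q) * (v₁ * p + v₂ * q) = -P.1 := by
    intro P
    by_cases hP : P ∈ F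
    · obtain ⟨-, -, p, q, u₁', u₂', v₁', v₂', h⟩ := hF P hP
      refine ⟨p, q, fun _ => ⟨h.hf, ?_⟩⟩
      obtain ⟨j1, j2, j3⟩ := h.inv hs0
      rw [← h.hx]
      linear_combination (p:ℂ) ^ 2 * (i1 - j1) + p * q * (i2 - j2) + (q:ℂ) ^ 2 * (i3 - j3)
    · exact ⟨0, 0, fun h => absurd h hP⟩
  choose p q hpq using key
  set U : ℤ × ℤ → ℂ := fun P => u₁ * p P + u₂ * q P with hU
  set V : ℤ × ℤ → ℂ := fun P => v₁ * p P + v₂ * q P with hV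
  have f3 : ∀ P ∈ F, U P ^ 3 + V P ^ 3 = 2 * s := by
    intro P hP
    have h1 : (a * p P ^ 3 + 3 * b * p P ^ 2 * q P + 3 * c * p P * q P ^ 2 + d * q P ^ 3 : ℂ) = 1 := by
      exact_mod_cast (hpq P hP).1
    simp only [hU, hV]
    linear_combination 2 * s * h1 - (p P : ℂ) ^ 3 * h₀.ha - 3 * (p P : ℂ) ^ 2 * q P * h₀.hb
      - 3 * (p P : ℂ) * q P ^ 2 * h₀.hc - (q P : ℂ) ^ 3 * h₀.hd
  have fuv : ∀ P ∈ F, U P * V P = -P.1 := fun P hP => (hpq P hP).2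
  obtain ⟨w, hw⟩ := exists_omega
  have hw3 : w ^ 3 = 1 := by linear_combination (w - 1) * hw
  have hmin : ∀ P, ∃ e : Fin 3, ∀ j : Fin 3, ‖U P + w ^ (e:ℕ) * V P‖ ≤ ‖U P + w ^ (j:ℕ) * V P‖ :=
    fun P => Finite.exists_min (fun e : Fin 3 => ‖U P + w ^ (e:ℕ) * V P‖)
  choose e he using hmin
  have hroot : ∀ z : ℂ, z ^ 3 = 1 → ∃ j : Fin 3, z = w ^ (j:ℕ) := by
    intro z hz
    have : (z - 1) * ((z - w) * (z - w ^ 2)) = 0 := by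
      linear_combination hz + (- z ^ 2 + z * w) * hw + (1 - z) * hw3 - hw3 + z * hw3 - hw3
    rcases mul_eq_zero.1 this with h | h
    · exact ⟨0, by simpa [sub_eq_zero] using h⟩
    rcases mul_eq_zero.1 h with h | h
    · exact ⟨1, by simpa [sub_eq_zero] using h⟩
    · exact ⟨2, by simpa [sub_eq_zero] using h⟩
  have hwn : ‖w‖ = 1 := by
    have : ‖w‖ ^ 3 = 1 := by rw [← norm_pow, hw3]; simp
    exact (pow_eq_one_iff_of_nonneg (norm_nonneg _) (by norm_num)).1 this
  have good : ∀ P ∈ F, Good k s P.1 P.2 (w ^ (e P : ℕ) * U P) (w ^ (2 * (e P : ℕ)) * V P) := by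
    intro P hP
    refine ⟨hs, hk, (hF P hP).2.1, (hF P hP).1, ?_, ?_, ?_⟩
    · rw [← f3 P hP, mul_pow, mul_pow, ← pow_mul, ← pow_mul, mul_comm _ 3, mul_comm _ 3, pow_mul, pow_mul, hw3]
      simp
    · rw [← fuv P hP]
      have : w ^ (e P : ℕ) * w ^ (2 * (e P : ℕ)) = 1 := by
        rw [← pow_add, show (e P : ℕ) + 2 * (e P : ℕ) = 3 * (e P : ℕ) by ring, pow_mul, hw3, one_pow]
      linear_combination U P * V P * this
    · intro z hz
      have hz3 : (z * w ^ (e P : ℕ)) ^ 3 = 1 := by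
        rw [mul_pow, hz, ← pow_mul, mul_comm _ 3, pow_mul, hw3]; simp
      obtain ⟨j, hj⟩ := hroot _ hz3
      have h1 := he P j
      rw [← hj] at h1
      have n1 : ‖w ^ (e P : ℕ) * U P + w ^ (2 * (e P : ℕ)) * V P‖ = ‖U P + w ^ (e P : ℕ) * V P‖ := by
        rw [show w ^ (e P : ℕ) * U P + w ^ (2 * (e P : ℕ)) * V P = w ^ (e P : ℕ) * (U P + w ^ (e P : ℕ) * V P) by
          rw [two_mul, pow_add]; ring, norm_mul, norm_pow, hwn]; simp
      have n2 : ‖w ^ (e P : ℕ) * U P + z * (w ^ (2 * (e P : ℕ)) * V P)‖ = ‖U P + z * w ^ (e P : ℕ) * V P‖ := by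
        rw [show w ^ (e P : ℕ) * U P + z * (w ^ (2 * (e P : ℕ)) * V P) = w ^ (e P : ℕ) * (U P + z * w ^ (e P : ℕ) * V P) by
          rw [two_mul, pow_add]; ring, norm_mul, norm_pow, hwn]; simp
      rw [n1, n2]; exact h1
  have main : ∀ t : Fin 3, (F.filter (fun P => e P = t)).card ≤ 16 := by
    intro t
    set G := F.filter (fun P => e P = t) with hG
    have hGF : ∀ P ∈ G, P ∈ F ∧ e P = t := fun P hP => mem_filter.1 hP
    have h2 := two k G (fun P hP => (hF P (hGF P hP).1).1)
    have cross : ∀ P ∈ G, ∀ Q ∈ G, (w ^ (e P : ℕ) * U P) * (w ^ (2 * (e Q : ℕ)) * V Q) = U P * V Q := by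
      intro P hP Q hQ
      rw [(hGF P hP).2, (hGF Q hQ).2]
      have : w ^ (t : ℕ) * w ^ (2 * (t : ℕ)) = 1 := by
        rw [← pow_add, show (t : ℕ) + 2 * (t : ℕ) = 3 * (t : ℕ) by ring, pow_mul, hw3, one_pow]
      linear_combination U P * V Q * this
    have dif : ∀ P ∈ G, ∀ Q ∈ G, (w ^ (e P : ℕ) * U P) * (w ^ (2 * (e Q : ℕ)) * V Q) -
        (w ^ (e Q : ℕ) * U Q) * (w ^ (2 * (e P : ℕ)) * V P) = 2 * s * ((p Q * q P - p P * q Q : ℤ) : ℂ) := by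
      intro P hP Q hQ
      rw [cross P hP Q hQ, cross Q hQ P hP]
      simp only [hU, hV]
      push_cast
      linear_combination ((p P : ℂ) * q Q - p Q * q P) * h₀.hdet
    have sum : ∀ P ∈ G, ∀ Q ∈ G, (w ^ (e P : ℕ) * U P) * (w ^ (2 * (e Q : ℕ)) * V Q) +
        (w ^ (e Q : ℕ) * U Q) * (w ^ (2 * (e P : ℕ)) * V P) =
        ((2 * (a * c - b ^ 2) * p P * p Q + (a * d - b * c) * (p P * q Q + p Q * q P) + 2 * (b * d - c ^ 2) * q P * q Q : ℤ) : ℂ) := by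
      intro P hP Q hQ
      rw [cross P hP Q hQ, cross Q hQ P hP]
      simp only [hU, hV]
      push_cast at i1 i2 i3 ⊢
      linear_combination 2 * (p P : ℂ) * p Q * i1 + ((p P : ℂ) * q Q + p Q * q P) * i2 + 2 * (q P : ℂ) * q Q * i3
    have hm : ∀ P ∈ G, ∀ Q ∈ G, P.1 < Q.1 → p Q * q P - p P * q Q ≠ 0 := by
      intro P hP Q hQ hlt h0
      obtain ⟨e1, e2⟩ := par a b c d (p P) (q P) (p Q) (q Q) (hpq P (hGF P hP).1).1 (hpq Q (hGF Q hQ).1).1 (by linarith)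
      have h1 := (hpq P (hGF P hP).1).2
      have h2 := (hpq Q (hGF Q hQ).1).2
      rw [e1, e2, h2] at h1
      have : Q.1 = P.1 := by exact_mod_cast neg_injective h1
      omega
    have h3 : (G.image Prod.fst).card ≤ 8 := by
      apply chain k hk
      · intro x hx
        obtain ⟨P, hP, rfl⟩ := mem_image.1 hx
        exact (hF P (hGF P hP).1).2.1
      · intro x hx x' hx' hlt
        obtain ⟨P, hP, rfl⟩ := mem_image.1 hx
        obtain ⟨Q, hQ, rfl⟩ := mem_image.1 hx'
        exact gap (good P (hGF P hP).1) (good Q (hGF Q hQ).1) hlt.le _ (hm P hP Q hQ hlt) (dif P hP Q hQ)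
      · intro x hx x' hx' hlt
        obtain ⟨P, hP, rfl⟩ := mem_image.1 hx
        obtain ⟨Q, hQ, rfl⟩ := mem_image.1 hx'
        exact thue (good P (hGF P hP).1) (good Q (hGF Q hQ).1) _ _ (dif P hP Q hQ) (sum P hP Q hQ)
    omega
  have h1 := Finset.card_le_mul_card_image (f := e) F 16 (fun t _ => main t)
  have h2 : (F.image e).card ≤ 3 := by
    have := Finset.card_le_univ (F.image e)
    simpa using this
  omega

end Mord

namespace Mord
open Finset

lemma abs_bd (z B : ℤ) (n : ℕ) (hn : n ≠ 0) (hB : 0 ≤ B) (h : |z| ^ n ≤ B ^ n) : z ∈ Icc (-B) B := by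
  have := le_of_pow_le_pow_left₀ hn hB h
  rw [mem_Icc]; exact abs_le.1 this

lemma large (k : ℤ) (hk : 10 ^ 12 ≤ |k|) (N : ℕ) (hN : |k| ≤ (N:ℤ) ^ 12) (F : Finset (ℤ × ℤ))
    (hF : ∀ P ∈ F, P.2 ^ 2 = P.1 ^ 3 + k ∧ |k| ≤ 8 * P.1) : F.card ≤ 21120 * N ^ 10 := by
  have hk0 : k ≠ 0 := by rintro rfl; norm_num at hk
  obtain ⟨s, hs, H⟩ := point k hk0
  have hs0 : s ≠ 0 := by
    rintro rfl
    apply hk0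
    have : (k:ℂ) = 0 := by rw [← hs]; simp
    exact_mod_cast this
  have key : ∀ P : ℤ × ℤ, ∃ l : ℤ × ℤ × ℤ × ℤ, P ∈ F →
      (∃ (p q : ℤ) (u₁ u₂ v₁ v₂ : ℂ), Pt k s P.1 l.1 l.2.1 l.2.2.1 l.2.2.2 p q u₁ u₂ v₁ v₂) ∧
      l.1 ^ 4 ≤ 10 * |k| ∧ l.2.1 ^ 4 ≤ 10 * |k| ∧ (l.1 ≠ 0 → |l.2.2.1| ^ 3 ≤ 10 * |k|) ∧
      (l.1 = 0 → l.2.1 ≠ 0 ∧ l.2.2.1 ^ 2 ≤ 10 * |k|) := by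
    intro P
    by_cases hP : P ∈ F
    · obtain ⟨a, b, c, d, p, q, u₁, u₂, v₁, v₂, h1, h2⟩ := H P.1 P.2 (by
        have := (hF P hP).2
        norm_num at hk
        omega) (hF P hP).1
      exact ⟨(a, b, c, d), fun _ => ⟨⟨p, q, u₁, u₂, v₁, v₂, h1⟩, h2⟩⟩
    · exact ⟨0, fun h => absurd h hP⟩
  choose l hl using key
  have s1 : F.card ≤ 48 * (F.image l).card := by
    apply Finset.card_le_mul_card_image
    intro t _
    apply fiber k hk s hs t.1 t.2.1 t.2.2.1 t.2.2.2
    intro P hP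
    rw [mem_filter] at hP
    refine ⟨(hF P hP.1).1, (hF P hP.1).2, ?_⟩
    rw [← hP.2]
    exact (hl P hP.1).1
  set I := F.image l with hI
  set π : ℤ × ℤ × ℤ × ℤ → ℤ × ℤ × ℤ := fun t => (t.1, t.2.1, t.2.2.1) with hπ
  have hdisc : ∀ t ∈ I, (t.1 * t.2.2.2 - t.2.1 * t.2.2.1) ^ 2 -
      4 * (t.1 * t.2.2.1 - t.2.1 ^ 2) * (t.2.1 * t.2.2.2 - t.2.2.1 ^ 2) = 4 * k ∧ (t.1 = 0 → t.2.1 ≠ 0) := by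
    intro t ht
    obtain ⟨P, hP, rfl⟩ := mem_image.1 ht
    obtain ⟨⟨p, q, u₁, u₂, v₁, v₂, h1⟩, -, -, -, h2⟩ := hl P hP
    exact ⟨h1.disc hs0 hs, fun h => (h2 h).1⟩
  have s2 : I.card ≤ 2 * (I.image π).card := by
    apply Finset.card_le_mul_card_image
    rintro ⟨a, b, c⟩ _
    have hmem : ∀ t ∈ I.filter (fun t => π t = (a, b, c)), ∃ d, t = (a, b, c, d) ∧
        (a * d - b * c) ^ 2 - 4 * (a * c - b ^ 2) * (b * d - c ^ 2) = 4 * k ∧ (a = 0 → b ≠ 0) := by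
      rintro ⟨a', b', c', d'⟩ ht
      rw [mem_filter] at ht
      have h2 := ht.2
      simp only [hπ, Prod.mk.injEq] at h2
      obtain ⟨rfl, rfl, rfl⟩ := h2
      exact ⟨d', rfl, hdisc _ ht.1⟩
    by_cases ha : a = 0
    · subst ha
      refine le_trans (Finset.card_le_one.2 ?_) (by norm_num)
      intro t ht t' ht'
      obtain ⟨d, rfl, hd, hb⟩ := hmem t ht
      obtain ⟨d', rfl, hd', -⟩ := hmem t' ht'
      have hb := hb rfl
      have : (4 * b ^ 3) * d = (4 * b ^ 3) * d' := by linarith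
      have := mul_left_cancel₀ (by positivity) this
      rw [this]
    · apply card_two _ (fun t => a ^ 2 * t.2.2.2 - 3 * a * b * c + 2 * b ^ 3) (4 * a ^ 2 * k + 4 * (b ^ 2 - a * c) ^ 3)
      · intro t ht
        obtain ⟨d, rfl, hd, -⟩ := hmem t ht
        show (a ^ 2 * d - 3 * a * b * c + 2 * b ^ 3) ^ 2 = _
        linear_combination a ^ 2 * hd
      · intro t ht t' ht' h
        obtain ⟨d, rfl, hd, -⟩ := hmem t ht
        obtain ⟨d', rfl, hd', -⟩ := hmem t' ht'
        have h : a ^ 2 * d - 3 * a * b * c + 2 * b ^ 3 = a ^ 2 * d' - 3 * a * b * c + 2 * b ^ 3 := h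
        have : a ^ 2 * d = a ^ 2 * d' := by linarith
        have := mul_left_cancel₀ (by positivity) this
        rw [this]
  have hN1 : 1 ≤ N := by
    rcases Nat.eq_zero_or_pos N with h | h
    · subst h; norm_num at hN; exact absurd hN hk0
    · exact h
  have s3 : I.image π ⊆ (Icc (-(2 * (N:ℤ) ^ 3)) (2 * (N:ℤ) ^ 3) ×ˢ (Icc (-(2 * (N:ℤ) ^ 3)) (2 * (N:ℤ) ^ 3) ×ˢ
      Icc (-(3 * (N:ℤ) ^ 4)) (3 * (N:ℤ) ^ 4))) ∪ ({0} ×ˢ (Icc (-(2 * (N:ℤ) ^ 3)) (2 * (N:ℤ) ^ 3) ×ˢ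
      Icc (-(4 * (N:ℤ) ^ 6)) (4 * (N:ℤ) ^ 6))) := by
    intro r hr
    obtain ⟨t, ht, rfl⟩ := mem_image.1 hr
    obtain ⟨P, hP, rfl⟩ := mem_image.1 ht
    obtain ⟨-, h1, h2, h3, h4⟩ := hl P hP
    have hp : 0 ≤ (N:ℤ) ^ 12 := by positivity
    have e4 : Even 4 := by decide
    have m1 := abs_bd (l P).1 (2 * (N:ℤ) ^ 3) 4 (by norm_num) (by positivity) (by
      rw [e4.pow_abs]; refine h1.trans ?_; rw [mul_pow, ← pow_mul]; norm_num; linarith)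
    have m2 := abs_bd (l P).2.1 (2 * (N:ℤ) ^ 3) 4 (by norm_num) (by positivity) (by
      rw [e4.pow_abs]; refine h2.trans ?_; rw [mul_pow, ← pow_mul]; norm_num; linarith)
    by_cases ha : (l P).1 = 0
    · have m3 := abs_bd (l P).2.2.1 (4 * (N:ℤ) ^ 6) 2 (by norm_num) (by positivity) (by
        rw [sq_abs]; refine (h4 ha).2.trans ?_; rw [mul_pow, ← pow_mul]; norm_num; linarith)
      apply mem_union_right
      simp only [mem_product, mem_singleton]
      exact ⟨ha, m2, m3⟩
    · have m3 := abs_bd (l P).2.2.1 (3 * (N:ℤ) ^ 4) 3 (by norm_num) (by positivity) (by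
        refine (h3 ha).trans ?_; rw [mul_pow, ← pow_mul]; norm_num; linarith)
      apply mem_union_left
      simp only [mem_product]
      exact ⟨m1, m2, m3⟩
  have s4 : (I.image π).card ≤ 220 * N ^ 10 := by
    refine (card_le_card s3).trans ((card_union_le _ _).trans ?_)
    simp only [card_product, Int.card_Icc, card_singleton]
    have c1 : (2 * (N:ℤ) ^ 3 + 1 - -(2 * (N:ℤ) ^ 3)).toNat = 4 * N ^ 3 + 1 := by
      rw [show (2 * (N:ℤ) ^ 3 + 1 - -(2 * (N:ℤ) ^ 3)) = ((4 * N ^ 3 + 1 : ℕ) : ℤ) by push_cast; ring]; exact Int.toNat_natCast _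
    have c2 : (3 * (N:ℤ) ^ 4 + 1 - -(3 * (N:ℤ) ^ 4)).toNat = 6 * N ^ 4 + 1 := by
      rw [show (3 * (N:ℤ) ^ 4 + 1 - -(3 * (N:ℤ) ^ 4)) = ((6 * N ^ 4 + 1 : ℕ) : ℤ) by push_cast; ring]; exact Int.toNat_natCast _
    have c3 : (4 * (N:ℤ) ^ 6 + 1 - -(4 * (N:ℤ) ^ 6)).toNat = 8 * N ^ 6 + 1 := by
      rw [show (4 * (N:ℤ) ^ 6 + 1 - -(4 * (N:ℤ) ^ 6)) = ((8 * N ^ 6 + 1 : ℕ) : ℤ) by push_cast; ring]; exact Int.toNat_natCast _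
    rw [c1, c2, c3]
    have p3 : 1 ≤ N ^ 3 := Nat.one_le_pow _ _ hN1
    have p4 : 1 ≤ N ^ 4 := Nat.one_le_pow _ _ hN1
    have p6 : 1 ≤ N ^ 6 := Nat.one_le_pow _ _ hN1
    calc _ ≤ (5 * N ^ 3) * ((5 * N ^ 3) * (7 * N ^ 4)) + 1 * ((5 * N ^ 3) * (9 * N ^ 6)) := by
          gcongr <;> omega
      _ = 175 * N ^ 10 + 45 * N ^ 9 := by ring
      _ ≤ 175 * N ^ 10 + 45 * N ^ 10 := by gcongr <;> omega
      _ = _ := by ring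
  omega

lemma small (k : ℤ) (hk : 10 ^ 12 ≤ |k|) (F : Finset (ℤ × ℤ))
    (hF : ∀ P ∈ F, P.2 ^ 2 = P.1 ^ 3 + k ∧ 8 * P.1 < |k|) : (F.card : ℤ) ≤ 2 * (|k| / 4 + 2) := by
  have h1 := two k F (fun P hP => (hF P hP).1)
  have h2 : F.image Prod.fst ⊆ Icc (-(|k| / 8)) (|k| / 8) := by
    intro x hx
    obtain ⟨P, hP, rfl⟩ := mem_image.1 hx
    obtain ⟨e1, e2⟩ := hF P hP
    rw [mem_Icc]
    refine ⟨?_, by omega⟩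
    by_contra hlt
    have h3 : P.1 * 8 < -|k| := by omega
    have h4 : P.1 ^ 3 ≥ -|k| := by nlinarith [sq_nonneg P.2, le_abs_self k]
    norm_num at hk
    have h5 : 100 ≤ -P.1 := by omega
    nlinarith [mul_le_mul h5 h5 (by norm_num) (by linarith)]
  have h3 := card_le_card h2
  rw [Int.card_Icc] at h3
  omega

lemma final (k : ℤ) (hk : 10 ^ 60 ≤ |k|) (F : Finset (ℤ × ℤ)) (hF : ∀ P ∈ F, P.2 ^ 2 = P.1 ^ 3 + k) :
    (F.card : ℤ) < |k| := by
  have hk12 : 10 ^ 12 ≤ |k| := by norm_num at hk ⊢; omega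
  have hex : ∃ n : ℕ, |k| ≤ (n:ℤ) ^ 12 := ⟨k.natAbs, by
    rw [Int.abs_eq_natAbs]
    exact_mod_cast Nat.le_self_pow (by norm_num) _⟩
  classical
  obtain ⟨M, hM1, hM2⟩ : ∃ M : ℕ, |k| ≤ ((M + 1 : ℕ) : ℤ) ^ 12 ∧ (M:ℤ) ^ 12 < |k| := by
    have hs := Nat.find_spec hex
    have hm : Nat.find hex ≠ 0 := by
      intro h0
      have h1 : |k| ≤ 0 := by rw [h0] at hs; exact hs.trans (by norm_num)
      have h2 : 0 < |k| := lt_of_lt_of_le (by norm_num) hk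
      omega
    obtain ⟨M, hM⟩ := Nat.exists_eq_succ_of_ne_zero hm
    refine ⟨M, by rw [hM] at hs; exact hs, ?_⟩
    have := Nat.find_min hex (m := M) (by omega)
    omega
  have hMbig : 10 ^ 4 ≤ M := by
    by_contra hlt
    have h1 : M + 1 ≤ 10 ^ 4 := by omega
    have h2 : ((M + 1 : ℕ) : ℤ) ^ 12 ≤ (10 ^ 4) ^ 12 := by
      gcongr; exact_mod_cast h1
    norm_num at h2 hk hM1
    omega
  have hl := large k hk12 (M + 1) hM1 (F.filter (fun P => |k| ≤ 8 * P.1)) (fun P hP => by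
    rw [mem_filter] at hP; exact ⟨hF P hP.1, hP.2⟩)
  have hs := small k hk12 (F.filter (fun P => ¬ |k| ≤ 8 * P.1)) (fun P hP => by
    rw [mem_filter] at hP; exact ⟨hF P hP.1, by have := hP.2; omega⟩)
  have hc := card_filter_add_card_filter_not (s := F) (fun P => |k| ≤ 8 * P.1)
  have hb : 4 * (21120 * (M + 1) ^ 10) ≤ M ^ 12 := by
    calc 4 * (21120 * (M + 1) ^ 10) ≤ 4 * (21120 * (2 * M) ^ 10) := by gcongr; omega
      _ = 86507520 * M ^ 10 := by ring
      _ ≤ (10 ^ 4 * 10 ^ 4) * M ^ 10 := by gcongr; norm_num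
      _ ≤ (M * M) * M ^ 10 := by gcongr
      _ = _ := by ring
  have hb' : (4 * (21120 * ((M:ℤ) + 1) ^ 10)) ≤ (M:ℤ) ^ 12 := by exact_mod_cast hb
  have hl' : ((F.filter (fun P => |k| ≤ 8 * P.1)).card : ℤ) ≤ 21120 * ((M:ℤ) + 1) ^ 10 := by exact_mod_cast hl
  norm_num at hk12
  omega

end Mord

/-- The set of nonzero integers `k` for which the Mordell equation `y² = x³ + k`
has exactly `|k|` integral solutions is finite. -/
theorem stmt_0 :
    {k : ℤ | k ≠ 0 ∧
      Set.ncard {p : ℤ × ℤ | p.2 ^ 2 = p.1 ^ 3 + k} = k.natAbs}.Finite := by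
  apply (Set.finite_Icc (-(10 ^ 60 : ℤ)) (10 ^ 60)).subset
  rintro k ⟨hk0, hk⟩
  rw [Set.mem_Icc, ← abs_le]
  by_contra hlt
  have hfin : {p : ℤ × ℤ | p.2 ^ 2 = p.1 ^ 3 + k}.Finite := by
    apply Set.finite_of_ncard_ne_zero
    rw [hk]; simpa using hk0
  have h := Mord.final k (by linarith) hfin.toFinset (fun P hP => by simpa using hP)
  rw [← Set.ncard_eq_toFinset_card _ hfin, hk] at h
  rw [Int.abs_eq_natAbs] at h
  exact lt_irrefl _ h
end

section
/- Let a, b, c, d, x₀, y₀, k be integers such that the binary cubic form F(x, y) = a·x³ + 3b·x²y + 3c·xy² + d·y³ has discriminant D = -27(a²d² - 6abcd - 3b²c² + 4ac³ + 4b³d) equal to -108k, and suppose F(x₀, y₀) = 1. Set H₁(x, y) = (b² - ac)x² + (bc - ad)xy + (c² - bd)y² and G₁(x, y) = a₁x³ + 3b₁x²y + 3c₁xy² + d₁y³, where a₁ = -a²d + 3abc - 2b³, b₁ = -b²c - abd + 2ac², c₁ = bc² - 2b²d + acd, d₁ = -3bcd + 2c³ + ad². Then G₁(x₀, y₀) is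 even, and the integers X = H₁(x₀, y₀) and Y = G₁(x₀, y₀)/2 satisfy Y² = X³ + k. -/
/-- If `F(x,y) = a·x³ + 3b·x²y + 3c·xy² + d·y³` has discriminant
`D = -27(a²d² - 6abcd - 3b²c² + 4ac³ + 4b³d) = -108k` and `F(x₀,y₀) = 1`, then with
`H₁, G₁` the (scaled) Hessian and Jacobian covariants, `G₁(x₀,y₀)` is even and
`X = H₁(x₀,y₀)`, `Y = G₁(x₀,y₀)/2` satisfy `Y² = X³ + k`. -/
theorem stmt_4 (a b c d x₀ y₀ k : ℤ)
    (hD : -27 * (a ^ 2 * d ^ 2 - 6 * a * b * c * d - 3 * b ^ 2 * c ^ 2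
        + 4 * a * c ^ 3 + 4 * b ^ 3 * d) = -108 * k)
    (hF : a * x₀ ^ 3 + 3 * b * x₀ ^ 2 * y₀ + 3 * c * x₀ * y₀ ^ 2 + d * y₀ ^ 3 = 1) :
    2 ∣ ((-(a ^ 2) * d + 3 * a * b * c - 2 * b ^ 3) * x₀ ^ 3
        + 3 * (-(b ^ 2) * c - a * b * d + 2 * a * c ^ 2) * x₀ ^ 2 * y₀
        + 3 * (b * c ^ 2 - 2 * b ^ 2 * d + a * c * d) * x₀ * y₀ ^ 2
        + (-3 * b * c * d + 2 * c ^ 3 + a * d ^ 2) * y₀ ^ 3) ∧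
    (((-(a ^ 2) * d + 3 * a * b * c - 2 * b ^ 3) * x₀ ^ 3
        + 3 * (-(b ^ 2) * c - a * b * d + 2 * a * c ^ 2) * x₀ ^ 2 * y₀
        + 3 * (b * c ^ 2 - 2 * b ^ 2 * d + a * c * d) * x₀ * y₀ ^ 2
        + (-3 * b * c * d + 2 * c ^ 3 + a * d ^ 2) * y₀ ^ 3) / 2) ^ 2 =
      ((b ^ 2 - a * c) * x₀ ^ 2 + (b * c - a * d) * x₀ * y₀
        + (c ^ 2 - b * d) * y₀ ^ 2) ^ 3 + k := by
  have hk : a ^ 2 * d ^ 2 - 6 * a * b * c * d - 3 * b ^ 2 * c ^ 2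
        + 4 * a * c ^ 3 + 4 * b ^ 3 * d = 4 * k := by linarith
  have syz : ((-(a ^ 2) * d + 3 * a * b * c - 2 * b ^ 3) * x₀ ^ 3
        + 3 * (-(b ^ 2) * c - a * b * d + 2 * a * c ^ 2) * x₀ ^ 2 * y₀
        + 3 * (b * c ^ 2 - 2 * b ^ 2 * d + a * c * d) * x₀ * y₀ ^ 2
        + (-3 * b * c * d + 2 * c ^ 3 + a * d ^ 2) * y₀ ^ 3) ^ 2 =
      4 * ((b ^ 2 - a * c) * x₀ ^ 2 + (b * c - a * d) * x₀ * y₀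
        + (c ^ 2 - b * d) * y₀ ^ 2) ^ 3
      + (a ^ 2 * d ^ 2 - 6 * a * b * c * d - 3 * b ^ 2 * c ^ 2
        + 4 * a * c ^ 3 + 4 * b ^ 3 * d) *
        (a * x₀ ^ 3 + 3 * b * x₀ ^ 2 * y₀ + 3 * c * x₀ * y₀ ^ 2 + d * y₀ ^ 3) ^ 2 := by
    ring
  rw [hk, hF] at syz
  generalize ((-(a ^ 2) * d + 3 * a * b * c - 2 * b ^ 3) * x₀ ^ 3
        + 3 * (-(b ^ 2) * c - a * b * d + 2 * a * c ^ 2) * x₀ ^ 2 * y₀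
        + 3 * (b * c ^ 2 - 2 * b ^ 2 * d + a * c * d) * x₀ * y₀ ^ 2
        + (-3 * b * c * d + 2 * c ^ 3 + a * d ^ 2) * y₀ ^ 3) = G at syz ⊢
  generalize ((b ^ 2 - a * c) * x₀ ^ 2 + (b * c - a * d) * x₀ * y₀
        + (c ^ 2 - b * d) * y₀ ^ 2) = H at syz ⊢
  have h2 : (2 : ℤ) ∣ G :=
    Int.prime_two.dvd_of_dvd_pow (n := 2) ⟨2 * H ^ 3 + 2 * k, by linarith⟩
  refine ⟨h2, ?_⟩
  obtain ⟨m, rfl⟩ := h2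
  rw [Int.mul_ediv_cancel_left m (by norm_num)]
  linarith
end

section
/- For every positive integer n, n²/ζ(2) < ψ(n)·φ(n); equivalently, 6n²/π² < φ(n) · n·∏_{p prime, p ∣ n} (1 + 1/p), where φ is Euler's totient function. -/
open Real

theorem aux_prod_lt (n : ℕ) :
    ∏ p ∈ n.primeFactors, (1 - 1 / (p : ℝ) ^ 2)⁻¹ < π ^ 2 / 6 := by
  let f : ℕ →* ℝ :=
    { toFun := fun m => 1 / (m : ℝ) ^ 2
      map_one' := by simp
      map_mul' := fun a b => by push_cast; rw [mul_pow, one_div_mul_one_div] }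
  have hf : ∀ m : ℕ, f m = 1 / (m : ℝ) ^ 2 := fun m => rfl
  have hS : HasSum f (π ^ 2 / 6) := hasSum_zeta_two
  have hE := (EulerProduct.summable_and_hasSum_factoredNumbers_prod_filter_prime_geometric
    (f := f) (fun {p} hp => hS.summable.norm_lt_one hp.one_lt) n.primeFactors).2
  have hfil : n.primeFactors.filter Nat.Prime = n.primeFactors :=
    Finset.filter_true_of_mem fun p hp => Nat.prime_of_mem_primeFactors hp
  rw [hfil] at hE
  have hE2 := (hasSum_subtype_iff_indicator
    (f := (f : ℕ → ℝ)) (s := Nat.factoredNumbers n.primeFactors)).1 hE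
  obtain ⟨q, hq, hqp⟩ := Nat.exists_infinite_primes (n + 1)
  have hqn : q ∉ Nat.factoredNumbers n.primeFactors := by
    intro h
    have h1 := (Nat.mem_factoredNumbers'.1 h) q hqp dvd_rfl
    have := Nat.le_of_mem_primeFactors h1
    omega
  have hnn : ∀ m, 0 ≤ f m := fun m => by rw [hf]; positivity
  refine hasSum_lt (i := q) ?_ ?_ hE2 hS
  · exact Set.indicator_le_self' fun m _ => hnn m
  · rw [Set.indicator_of_notMem hqn, hf]
    have : 0 < (q : ℝ) := by exact_mod_cast hqp.pos
    positivity

/-- For every positive integer `n`, `n²/ζ(2) < ψ(n)·φ(n)`, i.e.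
`6n²/π² < φ(n) · n·∏_{p ∣ n prime} (1 + 1/p)`, where `ψ` is the Dedekind psi
function and `φ` is Euler's totient function. -/
theorem stmt_8 (n : ℕ) (hn : 0 < n) :
    (n : ℝ) ^ 2 / (π ^ 2 / 6) <
      ((n : ℝ) * ∏ p ∈ n.primeFactors, (1 + 1 / (p : ℝ))) * n.totient := by
  have h1 : (n.totient : ℝ) = n * ∏ p ∈ n.primeFactors, (1 - (p : ℝ)⁻¹) := by
    have := congrArg (fun x : ℚ => (x : ℝ)) (Nat.totient_eq_mul_prod_factors n)
    push_cast at this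
    exact this
  have h2 : ((n : ℝ) * ∏ p ∈ n.primeFactors, (1 + 1 / (p : ℝ))) * n.totient
      = (n : ℝ) ^ 2 * ∏ p ∈ n.primeFactors, (1 - 1 / (p : ℝ) ^ 2) := by
    rw [h1, mul_mul_mul_comm, ← Finset.prod_mul_distrib, ← sq]
    congr 1
    refine Finset.prod_congr rfl fun p _ => ?_
    rw [one_div, one_div, ← inv_pow]
    ring
  have hP : 0 < ∏ p ∈ n.primeFactors, (1 - 1 / (p : ℝ) ^ 2) := by
    refine Finset.prod_pos fun p hp => ?_
    have : (1 : ℝ) < p := by exact_mod_cast (Nat.prime_of_mem_primeFactors hp).one_lt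
    rw [sub_pos, div_lt_one (by positivity)]
    nlinarith
  have h3 := aux_prod_lt n
  rw [Finset.prod_inv_distrib] at h3
  have hn' : (0 : ℝ) < (n : ℝ) ^ 2 := by positivity
  rw [h2, div_eq_mul_inv]
  exact mul_lt_mul_of_pos_left (inv_lt_of_inv_lt₀ hP h3) hn'
end

section
/- Let a < b < c be real numbers. Then ∫_a^b dx/√((x - a)(b - x)(c - x)) = 2·∫_0^{π/2} dθ/√((c - b)·sin²θ + (c - a)·cos²θ). -/
open Real

/-- For reals `a < b < c`,
`∫_a^b dx/√((x-a)(b-x)(c-x)) = 2·∫_0^{π/2} dθ/√((c-b)sin²θ + (c-a)cos²θ)`. -/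
theorem stmt_9 (a b c : ℝ) (hab : a < b) (hbc : b < c) :
    ∫ x in a..b, 1 / Real.sqrt ((x - a) * (b - x) * (c - x)) =
      2 * ∫ θ in (0:ℝ)..(π / 2),
        1 / Real.sqrt ((c - b) * Real.sin θ ^ 2 + (c - a) * Real.cos θ ^ 2) := by
  have hd : 0 < b - a := sub_pos.2 hab
  have hpi := Real.pi_pos
  have hs : ∀ θ ∈ Set.Ioo (0:ℝ) (π / 2), 0 < Real.sin θ := fun θ h =>
    Real.sin_pos_of_pos_of_lt_pi h.1 (by linarith [h.2])
  have hc : ∀ θ ∈ Set.Ioo (0:ℝ) (π / 2), 0 < Real.cos θ := fun θ h =>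
    Real.cos_pos_of_mem_Ioo ⟨by linarith [h.1], h.2⟩
  have himg : (fun θ => a + (b - a) * Real.sin θ ^ 2) '' Set.Ioo (0:ℝ) (π / 2)
      = Set.Ioo a b := by
    ext x
    constructor
    · rintro ⟨θ, h, rfl⟩
      have h1 := hs θ h
      have h2 := hc θ h
      have h3 := Real.sin_sq_add_cos_sq θ
      have h4 : 0 < (b - a) * Real.sin θ ^ 2 := by positivity
      have h5 : 0 < (b - a) * Real.cos θ ^ 2 := by positivity
      have h6 : (b - a) * Real.sin θ ^ 2 + (b - a) * Real.cos θ ^ 2 = b - a := by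
        rw [← mul_add, h3, mul_one]
      constructor <;> dsimp only <;> linarith
    · rintro ⟨h1, h2⟩
      have h3 : 0 < (x - a) / (b - a) := div_pos (by linarith) hd
      have h4 : (x - a) / (b - a) < 1 := by rw [div_lt_one hd]; linarith
      have h5 : 0 < √((x - a) / (b - a)) := Real.sqrt_pos.2 h3
      have h6 : √((x - a) / (b - a)) < 1 := by
        rw [Real.sqrt_lt' one_pos]; simpa using h4
      refine ⟨Real.arcsin √((x - a) / (b - a)),
        ⟨Real.arcsin_pos.2 h5, Real.arcsin_lt_pi_div_two.2 h6⟩, ?_⟩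
      dsimp only
      rw [Real.sin_arcsin (by linarith) h6.le, Real.sq_sqrt h3.le]
      field_simp
      ring
  have hinj : Set.InjOn (fun θ => a + (b - a) * Real.sin θ ^ 2) (Set.Ioo (0:ℝ) (π / 2)) := by
    intro x hx y hy h
    have h1 : Real.sin x ^ 2 = Real.sin y ^ 2 := by
      have : (b - a) * Real.sin x ^ 2 = (b - a) * Real.sin y ^ 2 := by
        simpa using h
      exact mul_left_cancel₀ hd.ne' this
    have h2 : Real.sin x = Real.sin y :=
      (pow_left_inj₀ (hs x hx).le (hs y hy).le two_ne_zero).1 h1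
    exact Real.injOn_sin ⟨by linarith [hx.1], hx.2.le⟩ ⟨by linarith [hy.1], hy.2.le⟩ h2
  have hder : ∀ θ ∈ Set.Ioo (0:ℝ) (π / 2),
      HasDerivWithinAt (fun θ => a + (b - a) * Real.sin θ ^ 2)
        (2 * ((b - a) * (Real.sin θ * Real.cos θ))) (Set.Ioo (0:ℝ) (π / 2)) θ := by
    intro θ _
    have h := ((((Real.hasDerivAt_sin θ).pow 2).const_mul (b - a)).const_add a)
    refine (h.congr_deriv ?_).hasDerivWithinAt
    push_cast
    ring
  rw [intervalIntegral.integral_of_le hab.le, intervalIntegral.integral_of_le (by linarith),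
    MeasureTheory.integral_Ioc_eq_integral_Ioo, MeasureTheory.integral_Ioc_eq_integral_Ioo,
    ← himg, MeasureTheory.integral_image_eq_integral_abs_deriv_smul measurableSet_Ioo hder hinj,
    ← MeasureTheory.integral_const_mul]
  refine MeasureTheory.setIntegral_congr_fun measurableSet_Ioo ?_
  intro θ h
  have h1 := hs θ h
  have h2 := hc θ h
  have h3 := Real.sin_sq_add_cos_sq θ
  have hp : 0 < (b - a) * (Real.sin θ * Real.cos θ) := by positivity
  have e : (a + (b - a) * Real.sin θ ^ 2 - a) * (b - (a + (b - a) * Real.sin θ ^ 2)) *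
      (c - (a + (b - a) * Real.sin θ ^ 2)) = ((b - a) * (Real.sin θ * Real.cos θ)) ^ 2 *
      ((c - b) * Real.sin θ ^ 2 + (c - a) * Real.cos θ ^ 2) := by
    have : Real.cos θ ^ 2 = 1 - Real.sin θ ^ 2 := by linarith
    rw [mul_pow, mul_pow, this]
    ring
  dsimp only
  rw [e, Real.sqrt_mul (sq_nonneg _), Real.sqrt_sq hp.le, abs_of_pos (by linarith), smul_eq_mul]
  have hq : 0 < √((c - b) * Real.sin θ ^ 2 + (c - a) * Real.cos θ ^ 2) := by
    apply Real.sqrt_pos.2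
    have := sub_pos.2 hbc
    have := sub_pos.2 (hab.trans hbc)
    positivity
  generalize (b - a) * (Real.sin θ * Real.cos θ) = p at *
  field_simp
end

section
/- Let 0 < r < s be real numbers. Then ∫_0^{π/2} dθ/√(r²·sin²θ + s²·cos²θ) = ∫_0^{π/2} dθ/√(r·s·sin²θ + ((r + s)/2)²·cos²θ); that is, I(r, s) = I(√(rs), (r + s)/2), where I(r, s) := ∫_0^{π/2} dθ/√(r²sin²θ + s²cos²θ). -/
open Real

lemma aux_cos_sq (x w : ℝ) :
    cos (x + arctan w) ^ 2 = (cos x - w * sin x) ^ 2 / (1 + w ^ 2) := by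
  have h : (0:ℝ) < 1 + w ^ 2 := by positivity
  rw [cos_add, cos_arctan, sin_arctan]
  have h2 : √(1 + w ^ 2) ^ 2 = 1 + w ^ 2 := Real.sq_sqrt h.le
  have h3 : cos x * (1 / √(1 + w ^ 2)) - sin x * (w / √(1 + w ^ 2)) =
      (cos x - w * sin x) / √(1 + w ^ 2) := by ring
  rw [h3, div_pow, h2]

/-- The AGM invariance of the elliptic integral: for `0 < r < s`,
`I(r, s) = I(√(rs), (r + s)/2)`, where
`I(r, s) = ∫_0^{π/2} dθ/√(r²sin²θ + s²cos²θ)`. -/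
theorem stmt_10 (r s : ℝ) (hr : 0 < r) (hrs : r < s) :
    (∫ θ in (0:ℝ)..(π / 2),
        1 / Real.sqrt (r ^ 2 * Real.sin θ ^ 2 + s ^ 2 * Real.cos θ ^ 2)) =
      ∫ θ in (0:ℝ)..(π / 2),
        1 / Real.sqrt (r * s * Real.sin θ ^ 2 + ((r + s) / 2) ^ 2 * Real.cos θ ^ 2) := by
  have hs : 0 < s := hr.trans hrs
  have pos : ∀ a b : ℝ, 0 < a → 0 < b → ∀ θ : ℝ, 0 < a * sin θ ^ 2 + b * cos θ ^ 2 := by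
    intro a b ha hb θ
    have h1 := sin_sq_add_cos_sq θ
    rcases eq_or_ne (sin θ) 0 with h | h
    · have : cos θ ^ 2 = 1 := by rw [h] at h1; linarith
      rw [h, this]; simpa using hb
    · positivity
  set g : ℝ → ℝ := fun θ =>
    1 / Real.sqrt (r * s * Real.sin θ ^ 2 + ((r + s) / 2) ^ 2 * Real.cos θ ^ 2) with hg
  have gc : Continuous g := by
    refine Continuous.div (by fun_prop) (by fun_prop) fun θ => ?_
    exact (Real.sqrt_pos.2 (pos _ _ (by positivity) (by positivity) θ)).ne'
  let w : ℝ → ℝ := fun θ => (r - s) * (sin θ * cos θ) / (r * sin θ ^ 2 + s * cos θ ^ 2)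
  let f : ℝ → ℝ := fun θ => 2 * θ + arctan (w θ)
  let f' : ℝ → ℝ := fun θ => 1 + r * s / (r ^ 2 * sin θ ^ 2 + s ^ 2 * cos θ ^ 2)
  have key : ∀ θ, (r * sin θ ^ 2 + s * cos θ ^ 2) ^ 2 + ((r - s) * (sin θ * cos θ)) ^ 2
      = r ^ 2 * sin θ ^ 2 + s ^ 2 * cos θ ^ 2 := by
    intro θ
    rw [sin_sq]; ring_nf; rw [sin_sq]; ring
  have w1 : ∀ θ, 1 + w θ ^ 2 = (r ^ 2 * sin θ ^ 2 + s ^ 2 * cos θ ^ 2) /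
      (r * sin θ ^ 2 + s * cos θ ^ 2) ^ 2 := by
    intro θ
    have hD := (pos r s hr hs θ).ne'
    rw [← key]
    simp only [w]
    field_simp
  have hf : ∀ θ, HasDerivAt f (f' θ) θ := by
    intro θ
    have hD := (pos r s hr hs θ).ne'
    have hQ := (pos (r^2) (s^2) (by positivity) (by positivity) θ).ne'
    have hw : HasDerivAt w _ θ :=
      ((((hasDerivAt_sin θ).mul (hasDerivAt_cos θ)).const_mul (r - s)).div
        ((((hasDerivAt_sin θ).pow 2).const_mul r).add
          (((hasDerivAt_cos θ).pow 2).const_mul s)) hD)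
    have := ((hasDerivAt_id θ).const_mul 2).add hw.arctan
    refine this.congr_deriv ?_
    rw [w1]
    simp only [f', Pi.mul_apply, Pi.add_apply, Pi.pow_apply]
    have h1 := sin_sq_add_cos_sq θ
    generalize sin θ = S at *
    generalize cos θ = c at *
    field_simp
    have hc : c ^ 2 = 1 - S ^ 2 := by linarith
    have hc4 : c ^ 4 = (1 - S ^ 2)^2 := by rw [← hc]; ring
    push_cast
    ring_nf
    simp only [hc, hc4]
    ring
  have hf'c : Continuous f' := by
    refine continuous_const.add (Continuous.div (by fun_prop) (by fun_prop) fun θ => ?_)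
    exact (pos _ _ (by positivity) (by positivity) θ).ne'
  have sub := intervalIntegral.integral_comp_mul_deriv (a := 0) (b := π / 2)
    (fun x _ => hf x) hf'c.continuousOn gc
  have f0 : f 0 = 0 := by simp [f, w]
  have f1 : f (π / 2) = π := by simp [f, w]; ring
  have e : ∀ θ, (g ∘ f) θ * f' θ =
      2 * (1 / Real.sqrt (r ^ 2 * Real.sin θ ^ 2 + s ^ 2 * Real.cos θ ^ 2)) := by
    intro θ
    have hD := (pos r s hr hs θ)
    have hQ := (pos (r^2) (s^2) (by positivity) (by positivity) θ)
    have hcos : cos (f θ) ^ 2 = (s * cos θ ^ 2 - r * sin θ ^ 2) ^ 2 /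
        (r ^ 2 * sin θ ^ 2 + s ^ 2 * cos θ ^ 2) := by
      simp only [f]
      rw [aux_cos_sq, w1]
      have : cos (2 * θ) - w θ * sin (2 * θ) = (s * cos θ ^ 2 - r * sin θ ^ 2) /
          (r * sin θ ^ 2 + s * cos θ ^ 2) := by
        simp only [w]
        rw [cos_two_mul, sin_two_mul]
        have hD' := hD.ne'
        have hk : (r - s) * (sin θ * cos θ) / (r * sin θ ^ 2 + s * cos θ ^ 2) *
            (2 * sin θ * cos θ) * (r * sin θ ^ 2 + s * cos θ ^ 2) =
            2 * (r - s) * sin θ ^ 2 * cos θ ^ 2 := by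
          rw [div_mul_eq_mul_div, div_mul_cancel₀ _ hD']; ring
        rw [eq_div_iff hD', sub_mul, hk]
        have hc : cos θ ^ 2 = 1 - sin θ ^ 2 := by linarith [sin_sq_add_cos_sq θ]
        simp only [hc]
        ring
      rw [this]
      field_simp
    have hin : r * s * sin (f θ) ^ 2 + ((r + s) / 2) ^ 2 * cos (f θ) ^ 2 =
        ((r + s) / 2 * (r * sin θ ^ 2 + s * cos θ ^ 2)) ^ 2 /
          (r ^ 2 * sin θ ^ 2 + s ^ 2 * cos θ ^ 2) := by
      rw [sin_sq (f θ), hcos]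
      field_simp
      have hc : cos θ ^ 2 = 1 - sin θ ^ 2 := by linarith [sin_sq_add_cos_sq θ]
      simp only [hc]
      ring
    simp only [Function.comp, hg, f']
    rw [hin, Real.sqrt_div (by positivity), Real.sqrt_sq (by positivity)]
    have h2 := Real.sq_sqrt hQ.le
    have h3 := Real.sqrt_pos.2 hQ
    have h4 : 1 + r * s / (r ^ 2 * sin θ ^ 2 + s ^ 2 * cos θ ^ 2) =
        (r + s) * (r * sin θ ^ 2 + s * cos θ ^ 2) / 
          √(r ^ 2 * sin θ ^ 2 + s ^ 2 * cos θ ^ 2) ^ 2 := by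
      rw [h2]
      field_simp
      have hc : cos θ ^ 2 = 1 - sin θ ^ 2 := by linarith [sin_sq_add_cos_sq θ]
      simp only [hc]
      ring
    rw [h4]
    field_simp
  simp only [e] at sub
  rw [f0, f1, intervalIntegral.integral_const_mul,
    ← intervalIntegral.integral_add_adjacent_intervals (b := π / 2)
      (gc.intervalIntegrable _ _) (gc.intervalIntegrable _ _)] at sub
  have sym : ∫ x in (π / 2)..π, g x = ∫ x in (0:ℝ)..(π / 2), g x := by
    have := intervalIntegral.integral_comp_sub_left (a := 0) (b := π / 2) g π
    have h2 : ∀ x, g (π - x) = g x := by intro x; simp [hg]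
    simp only [h2] at this
    rw [this]
    congr 1 <;> ring
  rw [sym] at sub
  linarith
end

section
/- Let 0 < r < s be real numbers, and define sequences by a₀ = s, b₀ = r, a_{n+1} = (a_n + b_n)/2, b_{n+1} = √(a_n·b_n). Then (a_n) and (b_n) converge to a common limit M > 0 (the arithmetic–geometric mean of s and r), and ∫_0^{π/2} dθ/√(r²·sin²θ + s²·cos²θ) = π/(2M). -/
open Real Filter

noncomputable def agmF (a b θ : ℝ) : ℝ :=
  1 / Real.sqrt (b ^ 2 * Real.sin θ ^ 2 + a ^ 2 * Real.cos θ ^ 2)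

lemma agm_D_pos {a b : ℝ} (ha : 0 < a) (hb : 0 < b) (θ : ℝ) :
    0 < b ^ 2 * Real.sin θ ^ 2 + a ^ 2 * Real.cos θ ^ 2 := by
  have h := Real.sin_sq_add_cos_sq θ
  rcases eq_or_ne (Real.sin θ) 0 with h0 | h0
  · rw [h0] at h ⊢
    have : Real.cos θ ^ 2 = 1 := by linarith
    rw [this]; positivity
  · positivity

lemma agm_E_pos {a b : ℝ} (ha : 0 < a) (hb : 0 < b) (θ : ℝ) :
    0 < a * Real.cos θ ^ 2 + b * Real.sin θ ^ 2 := by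
  have h := Real.sin_sq_add_cos_sq θ
  rcases eq_or_ne (Real.sin θ) 0 with h0 | h0
  · rw [h0] at h ⊢
    have : Real.cos θ ^ 2 = 1 := by linarith
    rw [this]; positivity
  · positivity

lemma agmF_cont {a b : ℝ} (ha : 0 < a) (hb : 0 < b) : Continuous (agmF a b) := by
  unfold agmF
  refine Continuous.div (by fun_prop) (by fun_prop) fun x => ?_
  exact (Real.sqrt_pos.2 (agm_D_pos ha hb x)).ne'

noncomputable def agmT (a b θ : ℝ) : ℝ :=
  (a - b) * (Real.sin θ * Real.cos θ) / (a * Real.cos θ ^ 2 + b * Real.sin θ ^ 2)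

lemma agmT_deriv {a b : ℝ} (ha : 0 < a) (hb : 0 < b) (θ : ℝ) :
    HasDerivAt (fun θ => 2 * θ - Real.arctan (agmT a b θ))
      (1 + a * b / (b ^ 2 * Real.sin θ ^ 2 + a ^ 2 * Real.cos θ ^ 2)) θ := by
  have hE := agm_E_pos ha hb θ
  have hD := agm_D_pos ha hb θ
  have hs := Real.hasDerivAt_sin θ
  have hc := Real.hasDerivAt_cos θ
  have h1 := (((hs.mul hc).const_mul (a - b)).div
    (((hc.pow 2).const_mul a).add ((hs.pow 2).const_mul b)) hE.ne').arctan
  have h2 := ((hasDerivAt_id θ).const_mul 2).sub h1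
  refine h2.congr_deriv ?_
  have h := Real.sin_sq_add_cos_sq θ
  simp only [Pi.add_apply, Pi.mul_apply, Pi.pow_apply, Pi.div_apply]
  generalize Real.sin θ = s at *
  generalize Real.cos θ = c at *
  have hT : 1 + ((a - b) * (s * c) / (a * c ^ 2 + b * s ^ 2)) ^ 2 =
      (b ^ 2 * s ^ 2 + a ^ 2 * c ^ 2) / (a * c ^ 2 + b * s ^ 2) ^ 2 := by
    field_simp
    have : c ^ 2 = 1 - s ^ 2 := by linarith
    linear_combination (a ^ 2 * c ^ 2 + b ^ 2 * s ^ 2) * h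
  rw [hT]
  field_simp
  have : c ^ 2 = 1 - s ^ 2 := by linarith
  ring_nf
  rw [show c ^ 4 = (c ^ 2) ^ 2 by ring, this]
  ring

lemma agm_key {a b : ℝ} (ha : 0 < a) (hb : 0 < b) (θ : ℝ) :
    agmF ((a + b) / 2) (Real.sqrt (a * b)) (2 * θ - Real.arctan (agmT a b θ)) *
      (1 + a * b / (b ^ 2 * Real.sin θ ^ 2 + a ^ 2 * Real.cos θ ^ 2)) = 2 * agmF a b θ := by
  have hE := agm_E_pos ha hb θ
  have hD := agm_D_pos ha hb θ
  unfold agmF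
  have h := Real.sin_sq_add_cos_sq θ
  rw [Real.sin_sub, Real.cos_sub, Real.sin_arctan, Real.cos_arctan, Real.sin_two_mul,
    Real.cos_two_mul', Real.sq_sqrt (by positivity)]
  unfold agmT
  generalize Real.sin θ = s at *
  generalize Real.cos θ = c at *
  have hT : 1 + ((a - b) * (s * c) / (a * c ^ 2 + b * s ^ 2)) ^ 2 =
      (b ^ 2 * s ^ 2 + a ^ 2 * c ^ 2) / (a * c ^ 2 + b * s ^ 2) ^ 2 := by
    field_simp
    linear_combination (a ^ 2 * c ^ 2 + b ^ 2 * s ^ 2) * h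
  rw [hT, Real.sqrt_div hD.le, Real.sqrt_sq hE.le]
  have hR : 0 < √(b ^ 2 * s ^ 2 + a ^ 2 * c ^ 2) := Real.sqrt_pos.2 hD
  have hR2 := Real.sq_sqrt hD.le
  generalize √(b ^ 2 * s ^ 2 + a ^ 2 * c ^ 2) = R at *
  rw [← hR2]
  have hsin : 2 * s * c * (1 / (R / (a * c ^ 2 + b * s ^ 2))) - (c ^ 2 - s ^ 2) *
      ((a - b) * (s * c) / (a * c ^ 2 + b * s ^ 2) / (R / (a * c ^ 2 + b * s ^ 2))) =
      (a + b) * s * c / R := by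
    rw [div_div_div_cancel_right₀ hE.ne', one_div_div]
    field_simp
    linear_combination (a + b) * s * c * h
  have hcos : (c ^ 2 - s ^ 2) * (1 / (R / (a * c ^ 2 + b * s ^ 2))) + 2 * s * c *
      ((a - b) * (s * c) / (a * c ^ 2 + b * s ^ 2) / (R / (a * c ^ 2 + b * s ^ 2))) =
      (a * c ^ 2 - b * s ^ 2) / R := by
    rw [div_div_div_cancel_right₀ hE.ne', one_div_div]
    field_simp
    linear_combination (a * c ^ 2 - b * s ^ 2) * h
  rw [hsin, hcos]
  have : a * b * ((a + b) * s * c / R) ^ 2 + ((a + b) / 2) ^ 2 * ((a * c ^ 2 - b * s ^ 2) / R) ^ 2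
      = ((a + b) / 2 * (a * c ^ 2 + b * s ^ 2) / R) ^ 2 := by
    field_simp
    ring
  rw [this, Real.sqrt_sq (by positivity)]
  field_simp
  rw [hR2]
  linear_combination (-a * b) * h

lemma agm_step {a b : ℝ} (ha : 0 < a) (hb : 0 < b) :
    ∫ θ in (0:ℝ)..(π / 2), agmF ((a + b) / 2) (Real.sqrt (a * b)) θ =
      ∫ θ in (0:ℝ)..(π / 2), agmF a b θ := by
  have ha1 : 0 < (a + b) / 2 := by positivity
  have hb1 : 0 < √(a * b) := by positivity
  have hc := agmF_cont ha1 hb1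
  have h1 := intervalIntegral.integral_comp_mul_deriv (a := 0) (b := π / 2)
    (f := fun θ => 2 * θ - Real.arctan (agmT a b θ))
    (f' := fun θ => 1 + a * b / (b ^ 2 * Real.sin θ ^ 2 + a ^ 2 * Real.cos θ ^ 2))
    (g := agmF ((a + b) / 2) (Real.sqrt (a * b)))
    (fun x _ => agmT_deriv ha hb x)
    (Continuous.continuousOn (by
      refine continuous_const.add (Continuous.div (by fun_prop) (by fun_prop) fun x => ?_)
      exact (agm_D_pos ha hb x).ne')) hc
  simp only [Function.comp_def, agm_key ha hb] at h1
  rw [intervalIntegral.integral_const_mul] at h1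
  have e0 : 2 * (0:ℝ) - Real.arctan (agmT a b 0) = 0 := by simp [agmT]
  have e1 : 2 * (π / 2) - Real.arctan (agmT a b (π / 2)) = π := by simp [agmT]; ring
  rw [e0, e1] at h1
  have h2 := intervalIntegral.integral_add_adjacent_intervals
    (hc.intervalIntegrable (μ := MeasureTheory.volume) 0 (π / 2)) (hc.intervalIntegrable (π / 2) π)
  have h3 := intervalIntegral.integral_comp_sub_left (a := 0) (b := π / 2)
    (agmF ((a + b) / 2) (Real.sqrt (a * b))) π
  have h4 : ∀ x, agmF ((a + b) / 2) (Real.sqrt (a * b)) (π - x) =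
      agmF ((a + b) / 2) (Real.sqrt (a * b)) x := by
    intro x; simp [agmF]
  simp only [h4, sub_zero] at h3
  rw [show π - π / 2 = π / 2 by ring] at h3
  linarith

lemma agm_bounds {a b : ℝ} (hb : 0 < b) (hab : b ≤ a) :
    π / 2 * (1 / a) ≤ ∫ θ in (0:ℝ)..(π / 2), agmF a b θ ∧
      ∫ θ in (0:ℝ)..(π / 2), agmF a b θ ≤ π / 2 * (1 / b) := by
  have ha : 0 < a := hb.trans_le hab
  have hpi := Real.pi_pos
  have hi := (agmF_cont ha hb).intervalIntegrable (μ := MeasureTheory.volume) 0 (π / 2)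
  have hsq : b ^ 2 ≤ a ^ 2 := by gcongr
  constructor
  · have := intervalIntegral.integral_mono (a := 0) (b := π / 2) (μ := MeasureTheory.volume)
      (f := fun _ => 1 / a) (by positivity) (by simp) hi (fun x => by
        simp only [agmF]
        refine one_div_le_one_div_of_le (Real.sqrt_pos.2 (agm_D_pos ha hb x)) ?_
        rw [Real.sqrt_le_left ha.le]
        nlinarith [Real.sin_sq_add_cos_sq x, sq_nonneg (Real.sin x)])
    simpa using this
  · have := intervalIntegral.integral_mono (a := 0) (b := π / 2) (μ := MeasureTheory.volume)
      (g := fun _ => 1 / b) (by positivity) hi (by simp) (fun x => by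
        simp only [agmF]
        refine one_div_le_one_div_of_le hb ?_
        apply Real.le_sqrt_of_sq_le
        nlinarith [Real.sin_sq_add_cos_sq x, sq_nonneg (Real.cos x)])
    simpa using this

/-- For `0 < r < s`, the AGM sequences `a₀ = s`, `b₀ = r`, `a_{n+1} = (a_n + b_n)/2`,
`b_{n+1} = √(a_n b_n)` converge to a common limit `M > 0`, and
`∫_0^{π/2} dθ/√(r²sin²θ + s²cos²θ) = π/(2M)`. -/
theorem stmt_11 (r s : ℝ) (hr : 0 < r) (hrs : r < s) (a b : ℕ → ℝ)
    (ha0 : a 0 = s) (hb0 : b 0 = r)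
    (ha : ∀ n, a (n + 1) = (a n + b n) / 2)
    (hb : ∀ n, b (n + 1) = Real.sqrt (a n * b n)) :
    ∃ M : ℝ, 0 < M ∧ Tendsto a atTop (nhds M) ∧ Tendsto b atTop (nhds M) ∧
      (∫ θ in (0:ℝ)..(π / 2),
          1 / Real.sqrt (r ^ 2 * Real.sin θ ^ 2 + s ^ 2 * Real.cos θ ^ 2)) =
        π / (2 * M) := by
  have hpos : ∀ n, 0 < b n ∧ b n ≤ a n := by
    intro n
    induction n with
    | zero => rw [ha0, hb0]; exact ⟨hr, hrs.le⟩
    | succ n ih =>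
      have h1 := ih.1
      have h2 : 0 < a n := ih.1.trans_le ih.2
      rw [ha, hb]
      refine ⟨by positivity, ?_⟩
      rw [Real.sqrt_le_left (by positivity)]
      nlinarith [sq_nonneg (a n - b n)]
  have hanti : Antitone a := antitone_nat_of_succ_le fun n => by
    rw [ha]; linarith [(hpos n).2]
  have hmono : Monotone b := monotone_nat_of_le_succ fun n => by
    rw [hb]; apply Real.le_sqrt_of_sq_le; nlinarith [(hpos n).2, (hpos n).1]
  have hA := tendsto_atTop_ciInf hanti ⟨0, by
    rintro _ ⟨n, rfl⟩; exact ((hpos n).1.trans_le (hpos n).2).le⟩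
  set M := ⨅ i, a i with hM
  have hB : Tendsto b atTop (nhds M) := by
    have h1 : Tendsto (fun n => 2 * a (n + 1) - a n) atTop (nhds (2 * M - M)) :=
      ((hA.comp (tendsto_add_atTop_nat 1)).const_mul 2).sub hA
    rw [show 2 * M - M = M by ring] at h1
    refine h1.congr fun n => ?_
    rw [ha]; ring
  have hMpos : 0 < M := (hpos 0).1.trans_le (hmono.ge_of_tendsto hB 0)
  refine ⟨M, hMpos, hA, hB, ?_⟩
  have hI : ∀ n, ∫ θ in (0:ℝ)..(π / 2), agmF (a n) (b n) θ =
      ∫ θ in (0:ℝ)..(π / 2), agmF s r θ := by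
    intro n
    induction n with
    | zero => rw [ha0, hb0]
    | succ n ih => rw [ha, hb, agm_step ((hpos n).1.trans_le (hpos n).2) (hpos n).1, ih]
  change ∫ θ in (0:ℝ)..(π / 2), agmF s r θ = _
  have l1 : Tendsto (fun n => π / 2 * (1 / a n)) atTop (nhds (π / 2 * (1 / M))) :=
    (tendsto_const_nhds.div hA hMpos.ne').const_mul _
  have l2 : Tendsto (fun n => π / 2 * (1 / b n)) atTop (nhds (π / 2 * (1 / M))) :=
    (tendsto_const_nhds.div hB hMpos.ne').const_mul _
  have e : π / (2 * M) = π / 2 * (1 / M) := by field_simp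
  rw [e]
  apply le_antisymm
  · exact ge_of_tendsto' l2 fun n => hI n ▸ (agm_bounds (hpos n).1 (hpos n).2).2
  · exact le_of_tendsto' l1 fun n => hI n ▸ (agm_bounds (hpos n).1 (hpos n).2).1
end

section
/- Let t ≥ 1 be an integer with t ≠ 2 such that t² + 4 is squarefree. Then the only pair of positive integers (x, y) satisfying y² = (t² + 4)·x⁴ - 4 is (x, y) = (1, t); that is, {(x, y) ∈ ℤ² : x ≥ 1, y ≥ 1, y² = (t² + 4)x⁴ - 4} = {(1, t)}. -/
abbrev QA (t : ℤ) := QuadraticAlgebra ℤ 1 t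

def ww (t : ℤ) : QA t := ⟨0, 1⟩

lemma ww_mul (t a b : ℤ) : ww t * (⟨a, b⟩ : QA t) = ⟨b, a + t * b⟩ := by
  ext <;> simp [ww]

lemma ww_sq (t : ℤ) : ww t ^ 2 = 1 + (t : QA t) * ww t := by
  ext <;> simp [ww, pow_two] <;> rfl

lemma ww_inv (t : ℤ) : ww t * (ww t - (t : QA t)) = 1 := by
  ext <;> simp [ww] <;> rfl

lemma descent (t : ℤ) (ht : 1 ≤ t) : ∀ N : ℕ, ∀ a b : ℤ, 0 ≤ a → 0 ≤ b → a + b ≤ N →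
    (a ^ 2 + t * a * b - b ^ 2 = 1 ∨ a ^ 2 + t * a * b - b ^ 2 = -1) →
    ∃ n : ℕ, ww t ^ n = ⟨a, b⟩ ∧ a ^ 2 + t * a * b - b ^ 2 = (-1) ^ n := by
  intro N
  induction N with
  | zero =>
    intro a b ha hb hab h
    have h1 : a = 0 := by push_cast at hab; omega
    have h2 : b = 0 := by push_cast at hab; omega
    subst h1 h2
    simp at h
  | succ N ih =>
    intro a b ha hb hab h
    rcases eq_or_lt_of_le hb with hb0 | hb0
    · subst hb0
      have : a = 1 := by
        rcases h with h | h <;> nlinarith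
      subst this
      exact ⟨0, by ext <;> simp <;> rfl, by simp⟩
    rcases eq_or_lt_of_le ha with ha0 | ha0
    · subst ha0
      have : b = 1 := by
        rcases h with h | h <;> nlinarith
      subst this
      exact ⟨1, by simp [ww], by simp⟩
    have hle : 0 ≤ b - t * a := by
      by_contra hlt
      have h3 : 1 ≤ t * a - b := by omega
      have h4 : b * 1 ≤ b * (t * a - b) := mul_le_mul_of_nonneg_left h3 hb
      have h5 : a ^ 2 + t * a * b - b ^ 2 ≥ 2 := by nlinarith
      omega
    have hta : 1 * a ≤ t * a := mul_le_mul_of_nonneg_right ht ha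
    have e : (b - t * a) ^ 2 + t * (b - t * a) * a - a ^ 2 = -(a ^ 2 + t * a * b - b ^ 2) := by ring
    obtain ⟨n, hn, hs⟩ := ih (b - t * a) a hle ha (by push_cast at hab; omega)
      (by rw [e]; omega)
    refine ⟨n + 1, ?_, ?_⟩
    · rw [pow_succ', hn, ww_mul]
      ext <;> simp
    · rw [pow_succ (-1 : ℤ), ← hs, e]; ring

lemma exV (t : ℤ) (ht : t % 2 = 1) (s : ℕ) :
    ∃ V : ℤ, V % 4 = 3 ∧ 0 ≤ V ∧ ww t ^ (2 ^ (s + 2)) + 1 = (V : QA t) * ww t ^ (2 ^ (s + 1)) := by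
  induction s with
  | zero =>
    refine ⟨t ^ 2 + 2, ?_, by positivity, ?_⟩
    · obtain ⟨k, rfl⟩ : ∃ k, t = 2 * k + 1 := ⟨t / 2, by omega⟩
      ring_nf; omega
    · have h := ww_sq t
      push_cast
      norm_num
      linear_combination (ww t ^ 2 - 1 + (t : QA t) * ww t) * h
  | succ s ih =>
    obtain ⟨V, h4, h0, h⟩ := ih
    have hV : (V ^ 2 - 2) % 4 = 3 := by
      obtain ⟨k, rfl⟩ : ∃ k, V = 4 * k + 3 := ⟨V / 4, by omega⟩
      ring_nf; omega
    refine ⟨V ^ 2 - 2, hV, ?_, ?_⟩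
    · have : 3 ≤ V := by omega
      nlinarith
    · have e1 : ww t ^ (2 ^ (s + 1 + 2)) = (ww t ^ (2 ^ (s + 2))) ^ 2 := by
        rw [← pow_mul]; congr 1
      have e2 : ww t ^ (2 ^ (s + 1 + 1)) = (ww t ^ (2 ^ (s + 1))) ^ 2 := by
        rw [← pow_mul]; congr 1
      have e3 : ww t ^ (2 ^ (s + 2)) = (ww t ^ (2 ^ (s + 1))) ^ 2 := e2
      rw [e1, e2]
      rw [e3] at h
      push_cast
      generalize ww t ^ (2 ^ (s + 1)) = z at *
      linear_combination (z ^ 2 + 1 + (V : QA t) * z) * h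

lemma no_sq (V x : ℤ) (h4 : V % 4 = 3) (h0 : 0 ≤ V) (hd : V ∣ x ^ 2 + 1) : False := by
  obtain ⟨v, rfl⟩ := Int.eq_ofNat_of_zero_le h0
  have hs : IsSquare (-1 : ZMod v) := by
    refine ⟨(x : ZMod v), ?_⟩
    have h := (ZMod.intCast_zmod_eq_zero_iff_dvd (x ^ 2 + 1) v).2 hd
    push_cast at h
    linear_combination -h
  have hv : v ≠ 0 := by rintro rfl; simp at h4
  have key : ∀ q : ℕ, q ∣ v → q % 4 ≠ 3 := by
    have help : ∀ a b : ZMod 4, a ≠ 3 → b ≠ 3 → a * b ≠ 3 := by decide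
    refine @induction_on_primes _ ?_ ?_ (fun p q hp hq hpq => ?_)
    · exact fun _ => by simp
    · exact fun _ => by simp
    · have hp := Nat.mod_four_ne_three_of_mem_primeFactors_of_isSquare_neg_one
        (Nat.mem_primeFactors.mpr ⟨hp, dvd_of_mul_right_dvd hpq, hv⟩) hs
      replace hq := hq (dvd_of_mul_left_dvd hpq)
      rw [show 3 = 3 % 4 by simp, Ne, ← ZMod.natCast_eq_natCast_iff'] at hp hq ⊢
      rw [Nat.cast_mul]
      exact help p q hp hq
  exact key v (dvd_refl v) (by omega)

lemma dvd_im (t V : ℤ) (z : QA t) (h : (V : QA t) ∣ z) : V ∣ z.im := by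
  obtain ⟨c, rfl⟩ := h
  exact ⟨c.im, by simp⟩

lemma exdvd (t : ℤ) (ht : t % 2 = 1) (m : ℕ) (hm : m ≠ 0) :
    ∃ V : ℤ, V % 4 = 3 ∧ 0 ≤ V ∧ (V : QA t) ∣ ww t ^ (4 * m) + 1 := by
  obtain ⟨k, j, hj, rfl⟩ := Nat.exists_eq_two_pow_mul_odd hm
  obtain ⟨V, h4, h0, h⟩ := exV t ht k
  refine ⟨V, h4, h0, ?_⟩
  have h1 : (V : QA t) ∣ ww t ^ (2 ^ (k + 2)) + 1 := ⟨_, h⟩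
  have h2 := Odd.add_dvd_pow_add_pow (ww t ^ (2 ^ (k + 2))) 1 hj
  rw [one_pow, ← pow_mul] at h2
  have : 4 * (2 ^ k * j) = 2 ^ (k + 2) * j := by ring
  rw [this]
  exact h1.trans h2

/-- For an integer `t ≥ 1`, `t ≠ 2`, with `t² + 4` squarefree, the only pair of
positive integers `(x, y)` with `y² = (t² + 4)x⁴ - 4` is `(1, t)`. -/
theorem stmt_12 (t : ℤ) (ht1 : 1 ≤ t) (ht2 : t ≠ 2) (hsf : Squarefree (t ^ 2 + 4)) :
    {p : ℤ × ℤ | 1 ≤ p.1 ∧ 1 ≤ p.2 ∧ p.2 ^ 2 = (t ^ 2 + 4) * p.1 ^ 4 - 4} =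
      {(1, t)} := by
  have hodd : t % 2 = 1 := by
    by_contra h
    obtain ⟨k, rfl⟩ : ∃ k, t = 2 * k := ⟨t / 2, by omega⟩
    have := hsf 2 ⟨k ^ 2 + 1, by ring⟩
    rw [Int.isUnit_iff] at this
    omega
  ext ⟨x, y⟩
  simp only [Set.mem_setOf_eq, Set.mem_singleton_iff, Prod.mk.injEq]
  constructor
  swap
  · rintro ⟨rfl, rfl⟩
    exact ⟨le_refl _, ht1, by ring⟩
  rintro ⟨hx, hy, h⟩
  have hX : 1 ≤ x ^ 2 := by nlinarith
  have hge : t * x ^ 2 ≤ y := by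
    apply le_of_sq_le_sq _ (by omega)
    nlinarith
  have hpar : (y - t * x ^ 2) % 2 = 0 := by
    have h1 : (y - t * x ^ 2) * (y + t * x ^ 2) = 4 * (x ^ 4 - 1) := by linear_combination h
    by_contra hne
    obtain ⟨k, hk⟩ : ∃ k, y - t * x ^ 2 = 2 * k + 1 := ⟨(y - t * x ^ 2) / 2, by omega⟩
    have h2 : y + t * x ^ 2 = 2 * (k + t * x ^ 2) + 1 := by linear_combination hk
    rw [h2, hk] at h1
    ring_nf at h1
    omega
  obtain ⟨a, ha⟩ : ∃ a, y = t * x ^ 2 + 2 * a := ⟨(y - t * x ^ 2) / 2, by omega⟩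
  have ha0 : 0 ≤ a := by omega
  have hN : a ^ 2 + t * a * x ^ 2 - (x ^ 2) ^ 2 = -1 := by
    subst ha
    have : 4 * (a ^ 2 + t * a * x ^ 2 - (x ^ 2) ^ 2) = -4 := by linear_combination h
    omega
  obtain ⟨n, hn, hs⟩ := descent t ht1 (a + x ^ 2).toNat a (x ^ 2) ha0 (by omega) (by omega)
    (Or.inr hN)
  have hno : Odd n := by
    rcases Nat.even_or_odd n with he | ho
    · rw [he.neg_one_pow] at hs; omega
    · exact ho
  have hno2 := Nat.odd_iff.1 hno
  obtain ⟨m, hm | hm⟩ : ∃ m, n = 4 * m + 1 ∨ n + 1 = 4 * m := by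
    rcases (by omega : n % 4 = 1 ∨ n % 4 = 3) with h' | h'
    · exact ⟨n / 4, by omega⟩
    · exact ⟨(n + 1) / 4, by omega⟩
  · by_cases hm0 : m = 0
    · subst hm0
      simp only [mul_zero, zero_add] at hm
      rw [hm, pow_one, ww, QuadraticAlgebra.mk.injEq] at hn
      have hx1 : x = 1 := by nlinarith [hn.2]
      subst hx1
      exact ⟨rfl, by rw [ha, ← hn.1]; ring⟩
    · exfalso
      obtain ⟨V, h4, h0, hd⟩ := exdvd t hodd m hm0
      have hd2 := dvd_im t V _ (hd.mul_right (ww t))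
      rw [add_mul, ← pow_succ, ← hm, hn] at hd2
      exact no_sq V x h4 h0 (by simpa [ww] using hd2)
  · exfalso
    obtain ⟨V, h4, h0, hd⟩ := exdvd t hodd m (by omega)
    have hd2 := dvd_im t V _ (hd.mul_right (ww t - (t : QA t)))
    rw [add_mul, ← hm, pow_succ, mul_assoc, ww_inv, mul_one, hn] at hd2
    exact no_sq V x h4 h0 (by simpa [ww] using hd2)
end
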